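/- arXiv:1303.7184 — 6 statements merged into one kernel-verified Lean document; each statement's English description precedes it below -/
import Mathlib

section
/- Let μ = e^{−V}dx and ν = e^{−W}dx be probability measures on ℝ with V and W continuously differentiable, and let T : ℝ → ℝ be the increasing transport map pushing μ onto ν, defined by ∫_{−∞}^{x} e^{−V(t)} dt = ∫_{−∞}^{T(x)} e^{−W(t)} dt. Assume there exist p > 1 and ε > 0 such that x·W′(x) ≥ (−1+ε)/(p−1) for all x ∈ ℝ, and there exists δ > 0 such that ∫ |x|^{p(p+δ)/δ} dν < ∞ and ∫ |V′|^{p+δ} dμ < ∞. Then T is continuously differentiable and ∫ (T′)^p dμ < ∞. -/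
open MeasureTheory Real Set

/-!
Differentiating the mass balance gives `T' = e^{W ∘ T - V}`, whence
`(T (T')^{p-1} e^{-V})' = ((1 + (p-1) T W'(T)) (T')^p - p T V' (T')^{p-1}) e^{-V}`.
The hypothesis on `W` says that the coefficient of `(T')^p` is at least `ε`. Integrating against the
cut-off `φ^p` with `φ x = 1 - (x/R)^2` kills the boundary terms, Young's inequality absorbs
`(T')^{p-1}` into `(T')^p`, and `∫ (T')^p dμ` is bounded by a multiple of
`∫ (|T| (|V'| + 1))^p dμ`, where the `1` pays for `φ'`. By Hölder's inequality and `T_* μ = ν` the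
latter integral is controlled by the two moments.
-/

section Calculus

lemma hasStrictDerivAt_integral_Iic {E : Type*} [NormedAddCommGroup E] [NormedSpace ℝ E]
    [CompleteSpace E] {f : ℝ → E} (hf : Continuous f) (hfi : Integrable f) (x : ℝ) :
    HasStrictDerivAt (fun y => ∫ t in Iic y, f t) (f x) x := by
  have hsplit : (fun y => ∫ t in Iic y, f t) = fun y => (∫ t in 0..y, f t) + ∫ t in Iic 0, f t := by
    funext y
    rw [← intervalIntegral.integral_Iic_sub_Iic hfi.integrableOn hfi.integrableOn, sub_add_cancel]
  rw [hsplit]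
  exact (hf.integral_hasStrictDerivAt 0 x).add_const _

lemma hasDerivAt_of_injective_comp {𝕜 : Type*} [NontriviallyNormedField 𝕜] [CompleteSpace 𝕜]
    {g f : 𝕜 → 𝕜} {g' c x : 𝕜} (hinj : Function.Injective g) (hg : HasStrictDerivAt g g' (f x))
    (hg' : g' ≠ 0) (hgf : HasDerivAt (g ∘ f) c x) : HasDerivAt f (g'⁻¹ * c) x := by
  have hcomp : HasDerivAt (hg.localInverse g g' (f x) hg' ∘ (g ∘ f)) (g'⁻¹ * c) x :=
    (hg.to_localInverse hg').hasDerivAt.comp x hgf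
  refine hcomp.congr_of_eventuallyEq ?_
  filter_upwards [hgf.continuousAt.eventually (hg.eventually_right_inverse hg')] with y hy
  exact hinj hy.symm

lemma rpow_eq_rpow_sub_one_mul {x p : ℝ} (hx : 0 ≤ x) (hp : p ≠ 0) : x ^ p = x ^ (p - 1) * x := by
  rw [← rpow_add_one' hx (by simpa using hp), sub_add_cancel]

lemma rpow_sub_one_mul_le {p η x y : ℝ} (hp : 1 ≤ p) (hη : 0 < η) (hx : 0 ≤ x) (hy : 0 ≤ y) :
    x ^ (p - 1) * y ≤ η * x ^ p + η ^ (1 - p) * y ^ p := by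
  have hp0 : p ≠ 0 := by positivity
  rcases le_total y (η * x) with h | h
  · calc x ^ (p - 1) * y ≤ x ^ (p - 1) * (η * x) := by gcongr
      _ = η * x ^ p := by rw [rpow_eq_rpow_sub_one_mul hx hp0]; ring
      _ ≤ η * x ^ p + η ^ (1 - p) * y ^ p := le_add_of_nonneg_right (by positivity)
  · have hxy : x ≤ η⁻¹ * y := by rwa [le_inv_mul_iff₀ hη]
    calc x ^ (p - 1) * y ≤ (η⁻¹ * y) ^ (p - 1) * y := by gcongr
      _ = η ^ (1 - p) * y ^ p := by
        rw [mul_rpow (by positivity) hy, inv_rpow hη.le, ← rpow_neg hη.le, neg_sub, mul_assoc,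
          ← rpow_eq_rpow_sub_one_mul hy hp0]
      _ ≤ η * x ^ p + η ^ (1 - p) * y ^ p := le_add_of_nonneg_left (by positivity)

/- The right-hand side is `e^V` times the derivative of `φ^p · T (T')^{p-1} e^{-V}`, where `D`, `t`,
`v` and `w` stand for `T'`, `T`, `V'` and `T · W'(T)`. -/
lemma sub_le_deriv_cutoff_mul_flux {p ε φ φ' D t v w : ℝ} (hp : 1 < p) (hε : 0 < ε)
    (hφ : φ ∈ Icc 0 1) (hφ' : |φ'| ≤ 1) (hD : 0 < D) (hw : ε ≤ 1 + (p - 1) * w) :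
    ε / 2 * (φ ^ p * D ^ p) - p * (ε / (2 * p)) ^ (1 - p) * (|t| * (|v| + 1)) ^ p ≤
      φ' * p * φ ^ (p - 1) * (t * D ^ (p - 1)) +
        φ ^ p * ((1 + (p - 1) * w) * D ^ p - p * (t * v) * D ^ (p - 1)) := by
  have hp0 : 0 < p := by linarith
  have hφD : 0 ≤ φ * D := mul_nonneg hφ.1 hD.le
  set y := |t| * (|v| + 1)
  have hyoung : p * ((φ * D) ^ (p - 1) * y) ≤
      ε / 2 * (φ * D) ^ p + p * (ε / (2 * p)) ^ (1 - p) * y ^ p := by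
    have h := mul_le_mul_of_nonneg_left (rpow_sub_one_mul_le (η := ε / (2 * p)) hp.le
      (by positivity) hφD (by positivity : 0 ≤ y)) hp0.le
    calc _ ≤ _ := h
      _ = _ := by field_simp
  have hty : t * (φ * v - φ') ≤ y := by
    calc t * (φ * v - φ') ≤ |t| * |φ * v - φ'| := by rw [← abs_mul]; exact le_abs_self _
      _ ≤ |t| * (|φ * v| + |φ'|) := by gcongr; exact abs_sub _ _
      _ ≤ y := by
        rw [abs_mul, abs_of_nonneg hφ.1]
        exact mul_le_mul_of_nonneg_left
          (add_le_add (mul_le_of_le_one_left (abs_nonneg v) hφ.2) hφ') (abs_nonneg t)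
  calc _ ≤ ε * (φ * D) ^ p - p * ((φ * D) ^ (p - 1) * y) := by
        rw [← mul_rpow hφ.1 hD.le]; linarith
    _ ≤ (1 + (p - 1) * w) * (φ * D) ^ p - p * ((φ * D) ^ (p - 1) * (t * (φ * v - φ'))) := by
        gcongr
    _ = _ := by
        rw [mul_rpow hφ.1 hD.le, mul_rpow hφ.1 hD.le, rpow_eq_rpow_sub_one_mul hφ.1 hp0.ne']
        ring

lemma parabola_mem_Icc {x R : ℝ} (hx : |x| ≤ R) : 1 - (x / R) ^ 2 ∈ Icc 0 1 := by
  have hR : 0 ≤ R := (abs_nonneg x).trans hx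
  have habs : |x / R| ≤ 1 := by
    rw [abs_div, abs_of_nonneg hR]
    exact div_le_one_of_le₀ hx hR
  have hsq : (x / R) ^ 2 ≤ 1 := (sq_le_one_iff_abs_le_one _).2 habs
  exact ⟨by linarith, by linarith [sq_nonneg (x / R)]⟩

lemma one_le_two_mul_parabola {x R : ℝ} (hx : |x| ≤ R) : 1 ≤ 2 * (1 - (x / (2 * R)) ^ 2) := by
  have hquarter : (x / (2 * R)) ^ 2 = (x / R) ^ 2 / 4 := by ring
  linarith [(parabola_mem_Icc hx).1]

end Calculus

section Integrability

variable {α : Type*} [MeasurableSpace α] {μ : Measure α}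

lemma integrable_abs_rpow_iff_memLp {f : α → ℝ} {q : ℝ} (hq : 0 < q)
    (hf : AEStronglyMeasurable f μ) :
    Integrable (fun x => |f x| ^ q) μ ↔ MemLp f (ENNReal.ofReal q) μ := by
  rw [← integrable_norm_rpow_iff hf (by simpa using hq) ENNReal.ofReal_ne_top,
    ENNReal.toReal_ofReal hq.le]
  rfl

lemma integrable_abs_mul_abs_add_one_rpow [IsFiniteMeasure μ] {f g : α → ℝ} {p δ : ℝ}
    (hp : 0 < p) (hδ : 0 < δ) (hf : AEStronglyMeasurable f μ) (hg : AEStronglyMeasurable g μ)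
    (hfi : Integrable (fun x => |f x| ^ (p * (p + δ) / δ)) μ)
    (hgi : Integrable (fun x => |g x| ^ (p + δ)) μ) :
    Integrable (fun x => (|f x| * (|g x| + 1)) ^ p) μ := by
  have hholder : HolderTriple (p * (p + δ) / δ) (p + δ) p :=
    ⟨by field_simp; ring, by positivity, by positivity⟩
  have := hholder.ennrealOfReal
  have hf' := (integrable_abs_rpow_iff_memLp hholder.pos hf).1 hfi
  have hg' := (integrable_abs_rpow_iff_memLp (by positivity) hg).1 hgi
  have hfg : MemLp (fun x => |f x| * (|g x| + 1)) (ENNReal.ofReal p) μ :=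
    (hg'.abs.add (memLp_const 1)).mul' hf'.abs
  refine ((integrable_abs_rpow_iff_memLp hp hfg.1).2 hfg).congr (.of_forall fun x => ?_)
  dsimp only
  rw [abs_of_nonneg (by positivity)]

lemma isFiniteMeasure_of_integrable_abs_rpow {ν : Measure ℝ} [IsLocallyFiniteMeasure ν] {m : ℝ}
    (hm : 0 ≤ m) (hν : Integrable (fun x => |x| ^ m) ν) : IsFiniteMeasure ν := by
  have hcover : univ ⊆ Icc (-1 : ℝ) 1 ∪ {x | 1 ≤ ‖|x| ^ m‖} := by
    intro x _
    rcases le_total |x| 1 with hx | hx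
    · exact .inl (abs_le.1 hx)
    · exact .inr ((one_le_rpow hx hm).trans (le_abs_self _))
  refine ⟨(measure_mono hcover).trans_lt (measure_union_lt_top ?_ ?_)⟩
  · exact isCompact_Icc.measure_lt_top
  · exact hν.measure_norm_ge_lt_top one_pos

lemma integrable_of_integral_parabola_rpow_mul_le {f : ℝ → ℝ} {p K : ℝ} (hp : 0 ≤ p)
    (hf : Continuous f) (hf0 : ∀ x, 0 ≤ f x)
    (hK : ∀ᶠ R in Filter.atTop, ∫ x in -R..R, (1 - (x / R) ^ 2) ^ p * f x ≤ K) :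
    Integrable f := by
  refine integrable_of_intervalIntegral_norm_bounded (2 ^ p * K)
    (fun R => hf.integrableOn_Icc.mono_set Ioc_subset_Icc_self)
    Filter.tendsto_neg_atTop_atBot Filter.tendsto_id ?_
  filter_upwards [(Filter.tendsto_id.const_mul_atTop two_pos).eventually hK,
    Filter.eventually_gt_atTop 0] with R hKR hR
  simp only [id_eq] at hKR ⊢
  set g : ℝ → ℝ := fun x => (1 - (x / (2 * R)) ^ 2) ^ p * f x
  have hg : Continuous g :=
    (Continuous.rpow_const (by fun_prop) fun _ => .inr hp).mul hf
  have hg0 : ∀ x ∈ Ioc (-(2 * R)) (2 * R), 0 ≤ g x := fun x hx =>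
    mul_nonneg (rpow_nonneg (parabola_mem_Icc (abs_le.2 ⟨hx.1.le, hx.2⟩)).1 _) (hf0 x)
  have hfg : ∀ x ∈ Icc (-R) R, ‖f x‖ ≤ 2 ^ p * g x := by
    intro x hx
    have hφ : 1 ≤ 2 * (1 - (x / (2 * R)) ^ 2) := one_le_two_mul_parabola (abs_le.2 hx)
    calc ‖f x‖ = 1 * f x := by rw [one_mul, norm_of_nonneg (hf0 x)]
      _ ≤ (2 * (1 - (x / (2 * R)) ^ 2)) ^ p * f x :=
        mul_le_mul_of_nonneg_right (one_le_rpow hφ hp) (hf0 x)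
      _ = 2 ^ p * g x := by rw [mul_rpow two_pos.le (by linarith), mul_assoc]
  calc ∫ x in -R..R, ‖f x‖ ≤ ∫ x in -R..R, 2 ^ p * g x :=
        intervalIntegral.integral_mono_on (by linarith) (hf.norm.intervalIntegrable _ _)
          ((hg.const_mul _).intervalIntegrable _ _) hfg
    _ = 2 ^ p * ∫ x in -R..R, g x := intervalIntegral.integral_const_mul _ _
    _ ≤ 2 ^ p * ∫ x in -(2 * R)..2 * R, g x := by
        gcongr
        exact intervalIntegral.integral_mono_interval (by linarith) (by linarith) (by linarith)
          (ae_restrict_of_forall_mem measurableSet_Ioc hg0) (hg.intervalIntegrable _ _)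
    _ ≤ 2 ^ p * K := by gcongr

end Integrability

/-- The measure `e^{-V} dx` on the line with potential `V`; it is not normalised, and not assumed
finite. -/
noncomputable def gibbsMeasure (V : ℝ → ℝ) : Measure ℝ :=
  volume.withDensity fun x => ENNReal.ofReal (exp (-V x))

lemma isLocallyFiniteMeasure_gibbsMeasure {V : ℝ → ℝ} (hV : Continuous V) :
    IsLocallyFiniteMeasure (gibbsMeasure V) :=
  .withDensity_ofReal (by fun_prop)

lemma integrable_gibbsMeasure_iff {V f : ℝ → ℝ} (hV : Measurable V) :
    Integrable f (gibbsMeasure V) ↔ Integrable fun x => f x * exp (-V x) := by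
  rw [gibbsMeasure, integrable_withDensity_iff (by fun_prop) (by simp)]
  simp only [ENNReal.toReal_ofReal (exp_pos _).le]

lemma isFiniteMeasure_gibbsMeasure_iff {V : ℝ → ℝ} (hV : Measurable V) :
    IsFiniteMeasure (gibbsMeasure V) ↔ Integrable fun x => exp (-V x) := by
  rw [← integrable_const_iff_isFiniteMeasure (one_ne_zero (α := ℝ)),
    integrable_gibbsMeasure_iff hV]
  simp only [one_mul]

/-- The one-dimensional Monge–Ampère equation `T' e^{-W ∘ T} = e^{-V}`, solved for `T'`: the
infinitesimal form of the statement that the increasing map `T` carries `e^{-V} dx` to `e^{-W} dx`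
(restricted to the range of `T`). -/
def SolvesMongeAmpere (V W T : ℝ → ℝ) : Prop :=
  ∀ x, HasDerivAt T (exp (W (T x) - V x)) x

section MassBalance

variable {V W T : ℝ → ℝ}

lemma integrable_exp_neg_of_integral_Iic_eq (hW : Integrable fun x => exp (-W x))
    (hT : ∀ x, ∫ t in Iic x, exp (-V t) = ∫ t in Iic (T x), exp (-W t)) :
    Integrable fun x => exp (-V x) := by
  have hV : ∀ x, IntegrableOn (fun t => exp (-V t)) (Iic x) := by
    intro x
    refine .of_integral_ne_zero ?_
    have : NeZero (volume.restrict (Iic (T x))) := ⟨by simp⟩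
    rw [hT]
    exact (integral_exp_pos hW.integrableOn).ne'
  refine (aecover_Iic Filter.tendsto_id).integrable_of_integral_norm_bounded
    (∫ t, exp (-W t)) hV (.of_forall fun x => ?_)
  simp only [norm_of_nonneg (exp_pos _).le, id_eq, hT]
  exact setIntegral_le_integral hW (.of_forall fun t => (exp_pos _).le)

lemma solvesMongeAmpere_of_integral_Iic_eq (hVc : Continuous V) (hWc : Continuous W)
    (hW : Integrable fun x => exp (-W x))
    (hT : ∀ x, ∫ t in Iic x, exp (-V t) = ∫ t in Iic (T x), exp (-W t)) :
    SolvesMongeAmpere V W T := by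
  intro x
  have hV := integrable_exp_neg_of_integral_Iic_eq hW hT
  set G : ℝ → ℝ := fun y => ∫ t in Iic y, exp (-W t)
  have hG : ∀ y, HasStrictDerivAt G (exp (-W y)) y :=
    hasStrictDerivAt_integral_Iic (by fun_prop) hW
  have hGmono : StrictMono G := strictMono_of_hasDerivAt_pos (fun y => (hG y).hasDerivAt)
    fun y => exp_pos _
  have hGT : HasDerivAt (G ∘ T) (exp (-V x)) x := by
    rw [show G ∘ T = fun y => ∫ t in Iic y, exp (-V t) from funext fun y => (hT y).symm]
    exact (hasStrictDerivAt_integral_Iic (by fun_prop) hV x).hasDerivAt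
  refine (hasDerivAt_of_injective_comp hGmono.injective (hG (T x)) (exp_ne_zero _)
    hGT).congr_deriv ?_
  rw [← exp_neg, ← exp_add, neg_neg, sub_eq_add_neg]

end MassBalance

namespace SolvesMongeAmpere

variable {V W T : ℝ → ℝ}

lemma deriv_eq (hT : SolvesMongeAmpere V W T) (x : ℝ) : deriv T x = exp (W (T x) - V x) :=
  (hT x).deriv

lemma deriv_pos (hT : SolvesMongeAmpere V W T) (x : ℝ) : 0 < deriv T x :=
  hT.deriv_eq x ▸ exp_pos _

lemma hasDerivAt (hT : SolvesMongeAmpere V W T) (x : ℝ) : HasDerivAt T (deriv T x) x :=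
  hT.deriv_eq x ▸ hT x

lemma continuous (hT : SolvesMongeAmpere V W T) : Continuous T :=
  continuous_iff_continuousAt.2 fun x => (hT x).continuousAt

lemma injective (hT : SolvesMongeAmpere V W T) : Function.Injective T :=
  (strictMono_of_deriv_pos hT.deriv_pos).injective

lemma continuous_deriv (hT : SolvesMongeAmpere V W T) (hV : Continuous V) (hW : Continuous W) :
    Continuous (deriv T) := by
  have := hT.continuous
  rw [funext hT.deriv_eq]
  fun_prop

lemma contDiff (hT : SolvesMongeAmpere V W T) (hV : Continuous V) (hW : Continuous W) :
    ContDiff ℝ 1 T :=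
  contDiff_one_iff_deriv.2 ⟨fun x => (hT x).differentiableAt, hT.continuous_deriv hV hW⟩

lemma integrable_comp (hT : SolvesMongeAmpere V W T) (hV : Measurable V) (hW : Measurable W)
    {f : ℝ → ℝ} (hf : Integrable f (gibbsMeasure W)) :
    Integrable (fun x => f (T x)) (gibbsMeasure V) := by
  rw [integrable_gibbsMeasure_iff hW] at hf
  rw [integrable_gibbsMeasure_iff hV, ← integrableOn_univ]
  refine ((integrableOn_image_iff_integrableOn_abs_deriv_smul .univ
    (fun x _ => (hT x).hasDerivWithinAt) hT.injective.injOn _).1 hf.integrableOn).congr_fun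
    (fun x _ => ?_) .univ
  dsimp only
  rw [abs_of_pos (exp_pos _), smul_eq_mul, mul_left_comm, ← exp_add]
  ring_nf

lemma hasDerivAt_deriv (hT : SolvesMongeAmpere V W T) (hV : Differentiable ℝ V)
    (hW : Differentiable ℝ W) (x : ℝ) :
    HasDerivAt (deriv T) (deriv T x * (deriv W (T x) * deriv T x - deriv V x)) x := by
  have hexp := (((hW (T x)).hasDerivAt.comp x (hT.hasDerivAt x)).sub (hV x).hasDerivAt).exp
  rw [funext hT.deriv_eq] at *
  exact hexp

lemma hasDerivAt_mul_deriv_rpow_mul_exp (hT : SolvesMongeAmpere V W T) (hV : Differentiable ℝ V)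
    (hW : Differentiable ℝ W) (p x : ℝ) :
    HasDerivAt (fun x => T x * deriv T x ^ (p - 1) * exp (-V x))
      (((1 + (p - 1) * (T x * deriv W (T x))) * deriv T x ^ p
        - p * (T x * deriv V x) * deriv T x ^ (p - 1)) * exp (-V x)) x := by
  have hD := hT.deriv_pos x
  have hflux := ((hT.hasDerivAt x).mul ((hT.hasDerivAt_deriv hV hW x).rpow_const
    (p := p - 1) (.inl hD.ne'))).mul (hV x).hasDerivAt.neg.exp
  refine hflux.congr_deriv ?_
  have hDp : deriv T x ^ p = deriv T x ^ (p - 1) * deriv T x := by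
    rw [rpow_sub_one hD.ne', div_mul_cancel₀ _ hD.ne']
  rw [hDp, rpow_sub_one hD.ne' (p - 1)]
  simp only [Pi.mul_apply, Pi.neg_apply]
  field_simp
  ring

lemma integral_cutoff_rpow_mul_deriv_rpow_le (hT : SolvesMongeAmpere V W T)
    (hV : ContDiff ℝ 1 V) (hW : ContDiff ℝ 1 W) {p ε : ℝ} (hp : 1 < p) (hε : 0 < ε)
    (hWε : ∀ y, ε ≤ 1 + (p - 1) * (y * deriv W y)) {φ φ' : ℝ → ℝ} {a b : ℝ} (hab : a ≤ b)
    (hφc : Continuous φ) (hφd : ∀ x ∈ Ioo a b, HasDerivAt φ (φ' x) x)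
    (hφ : ∀ x ∈ Ioo a b, φ x ∈ Icc 0 1) (hφ' : ∀ x ∈ Ioo a b, |φ' x| ≤ 1)
    (hφa : φ a = 0) (hφb : φ b = 0) :
    ε / 2 * ∫ x in a..b, φ x ^ p * (deriv T x ^ p * exp (-V x)) ≤
      p * (ε / (2 * p)) ^ (1 - p) *
        ∫ x in a..b, (|T x| * (|deriv V x| + 1)) ^ p * exp (-V x) := by
  have hp0 : 0 < p := by linarith
  have hVc := hV.continuous
  have hTc := hT.continuous
  have : Continuous (deriv V) := hV.continuous_deriv le_rfl
  have hT'c : Continuous (deriv T) := hT.continuous_deriv hVc hW.continuous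
  have hT'p : ∀ q : ℝ, Continuous fun x => deriv T x ^ q :=
    fun q => hT'c.rpow_const fun x => .inl (hT.deriv_pos x).ne'
  have hφp : Continuous fun x => φ x ^ p := hφc.rpow_const fun _ => .inr hp0.le
  have hyp : Continuous fun x => (|T x| * (|deriv V x| + 1)) ^ p :=
    Continuous.rpow_const (by fun_prop) fun _ => .inr hp0.le
  set C := p * (ε / (2 * p)) ^ (1 - p)
  set gain : ℝ → ℝ := fun x => φ x ^ p * (deriv T x ^ p * exp (-V x))
  set loss : ℝ → ℝ := fun x => (|T x| * (|deriv V x| + 1)) ^ p * exp (-V x)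
  have hgain : Continuous gain := by fun_prop
  have hloss : Continuous loss := by fun_prop
  set flux : ℝ → ℝ := fun x => T x * deriv T x ^ (p - 1) * exp (-V x)
  have hflux := hT.hasDerivAt_mul_deriv_rpow_mul_exp (hV.differentiable one_ne_zero)
    (hW.differentiable one_ne_zero) p
  have hle : ∫ x in a..b, (ε / 2 * gain x - C * loss x) ≤ φ b ^ p * flux b - φ a ^ p * flux a := by
    refine intervalIntegral.integral_le_sub_of_hasDeriv_right_of_le hab
      (hφp.mul ((hTc.mul (hT'p _)).mul (by fun_prop))).continuousOn
      (fun x hx => (((hφd x hx).rpow_const (.inr hp.le)).mul (hflux x)).hasDerivWithinAt)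
      (Continuous.integrableOn_Icc (by fun_prop)) fun x hx => ?_
    have h := mul_le_mul_of_nonneg_right (sub_le_deriv_cutoff_mul_flux (t := T x) (v := deriv V x)
      hp hε (hφ x hx) (hφ' x hx) (hT.deriv_pos x) (hWε (T x))) (exp_pos (-V x)).le
    dsimp only [gain, loss]
    linarith
  rw [hφa, hφb, zero_rpow hp0.ne', zero_mul, zero_mul, sub_zero,
    intervalIntegral.integral_sub ((hgain.const_mul _).intervalIntegrable _ _)
      ((hloss.const_mul _).intervalIntegrable _ _),
    intervalIntegral.integral_const_mul, intervalIntegral.integral_const_mul] at hle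
  linarith

lemma integral_parabola_rpow_mul_deriv_rpow_le (hT : SolvesMongeAmpere V W T)
    (hV : ContDiff ℝ 1 V) (hW : ContDiff ℝ 1 W) {p ε R : ℝ} (hp : 1 < p) (hε : 0 < ε)
    (hWε : ∀ y, ε ≤ 1 + (p - 1) * (y * deriv W y)) (hR : 2 ≤ R) :
    ε / 2 * ∫ x in -R..R, (1 - (x / R) ^ 2) ^ p * (deriv T x ^ p * exp (-V x)) ≤
      p * (ε / (2 * p)) ^ (1 - p) *
        ∫ x in -R..R, (|T x| * (|deriv V x| + 1)) ^ p * exp (-V x) := by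
  have hR0 : 0 < R := by linarith
  refine hT.integral_cutoff_rpow_mul_deriv_rpow_le hV hW hp hε hWε
    (φ := fun x => 1 - (x / R) ^ 2) (φ' := fun x => -(2 / R * (x / R))) (by linarith)
    (by fun_prop) (fun x _ => ?_) (fun x hx => parabola_mem_Icc (abs_lt.2 hx).le)
    (fun x hx => ?_) ?_ ?_
  · refine ((((hasDerivAt_id x).div_const R).pow 2).const_sub 1).congr_deriv ?_
    simp only [id_eq, Nat.cast_ofNat]
    ring
  · rw [abs_neg, abs_mul, abs_of_pos (by positivity : 0 < 2 / R), abs_div, abs_of_pos hR0]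
    exact mul_le_one₀ ((div_le_one hR0).2 hR) (by positivity)
      ((div_le_one hR0).2 (abs_lt.2 hx).le)
  · rw [neg_div, div_self hR0.ne']; norm_num
  · rw [div_self hR0.ne']; norm_num

theorem integrable_deriv_rpow (hT : SolvesMongeAmpere V W T)
    (hV : ContDiff ℝ 1 V) (hW : ContDiff ℝ 1 W) {p ε : ℝ} (hp : 1 < p) (hε : 0 < ε)
    (hWε : ∀ y, ε ≤ 1 + (p - 1) * (y * deriv W y))
    (hTV : Integrable (fun x => (|T x| * (|deriv V x| + 1)) ^ p) (gibbsMeasure V)) :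
    Integrable (fun x => deriv T x ^ p) (gibbsMeasure V) := by
  have hVc := hV.continuous
  rw [integrable_gibbsMeasure_iff hVc.measurable] at hTV ⊢
  have hT'p : Continuous fun x => deriv T x ^ p :=
    (hT.continuous_deriv hVc hW.continuous).rpow_const fun x => .inl (hT.deriv_pos x).ne'
  set C := p * (ε / (2 * p)) ^ (1 - p)
  have : 0 ≤ C := by positivity
  set I := ∫ x, (|T x| * (|deriv V x| + 1)) ^ p * exp (-V x)
  refine integrable_of_integral_parabola_rpow_mul_le (p := p) (K := 2 / ε * (C * I)) (by linarith)
    (by fun_prop) (fun x => mul_nonneg (rpow_nonneg (hT.deriv_pos x).le p) (exp_pos _).le) ?_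
  filter_upwards [Filter.eventually_ge_atTop 2] with R hR
  have hI : ∫ x in -R..R, (|T x| * (|deriv V x| + 1)) ^ p * exp (-V x) ≤ I := by
    rw [intervalIntegral.integral_of_le (by linarith)]
    exact setIntegral_le_integral hTV (.of_forall fun x => by positivity)
  rw [← inv_div ε 2, le_inv_mul_iff₀ (by positivity)]
  exact (hT.integral_parabola_rpow_mul_deriv_rpow_le hV hW hp hε hWε hR).trans (by gcongr)

end SolvesMongeAmpere

theorem stmt0_general
    {V W : ℝ → ℝ} (hV : ContDiff ℝ 1 V) (hW : ContDiff ℝ 1 W) {T : ℝ → ℝ}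
    (hT : ∀ x : ℝ, ∫ t in Iic x, exp (-V t) = ∫ t in Iic (T x), exp (-W t))
    {p ε : ℝ} (hp : 1 < p) (hε : 0 < ε)
    (hW' : ∀ x : ℝ, (-1 + ε) / (p - 1) ≤ x * deriv W x)
    {δ : ℝ} (hδ : 0 < δ)
    (hWmom : Integrable (fun x => |x| ^ (p * (p + δ) / δ)) (gibbsMeasure W))
    (hV' : Integrable (fun x => |deriv V x| ^ (p + δ)) (gibbsMeasure V)) :
    ContDiff ℝ 1 T ∧ Integrable (fun x => deriv T x ^ p) (gibbsMeasure V) := by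
  have hVc := hV.continuous
  have hWc := hW.continuous
  have := isLocallyFiniteMeasure_gibbsMeasure hWc
  have hWi : Integrable fun x => exp (-W x) := (isFiniteMeasure_gibbsMeasure_iff hWc.measurable).1
    (isFiniteMeasure_of_integrable_abs_rpow (m := p * (p + δ) / δ) (by positivity) hWmom)
  have : IsFiniteMeasure (gibbsMeasure V) := (isFiniteMeasure_gibbsMeasure_iff hVc.measurable).2
    (integrable_exp_neg_of_integral_Iic_eq hWi hT)
  have hMA : SolvesMongeAmpere V W T := solvesMongeAmpere_of_integral_Iic_eq hVc hWc hWi hT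
  have hWε : ∀ y, ε ≤ 1 + (p - 1) * (y * deriv W y) := fun y => by
    linarith [(div_le_iff₀' (by linarith)).1 (hW' y)]
  have hTmom := hMA.integrable_comp hVc.measurable hWc.measurable hWmom
  refine ⟨hMA.contDiff hVc hWc, hMA.integrable_deriv_rpow hV hW hp hε hWε ?_⟩
  exact integrable_abs_mul_abs_add_one_rpow (by linarith) hδ hMA.continuous.aestronglyMeasurable
    (hV.continuous_deriv le_rfl).aestronglyMeasurable hTmom hV'

/-- Let `μ = e^{-V} dx` and `ν = e^{-W} dx` be probability measures on ℝ
with `V`, `W` continuously differentiable, and let `T` be the increasing transport map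
pushing `μ` onto `ν`, i.e. `∫_{-∞}^x e^{-V} dt = ∫_{-∞}^{T x} e^{-W} dt` for all `x`.
If `x * W'(x) ≥ (-1+ε)/(p-1)` for some `p > 1`, `ε > 0`, and
`∫ |x|^{p(p+δ)/δ} dν < ∞`, `∫ |V'|^{p+δ} dμ < ∞` for some `δ > 0`,
then `T` is continuously differentiable and `∫ (T')^p dμ < ∞`. -/
theorem stmt0
    (V W : ℝ → ℝ) (hV : ContDiff ℝ 1 V) (hW : ContDiff ℝ 1 W)
    (μ ν : Measure ℝ)
    (hμ : μ = volume.withDensity (fun x => ENNReal.ofReal (Real.exp (-V x))))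
    (hν : ν = volume.withDensity (fun x => ENNReal.ofReal (Real.exp (-W x))))
    (hμP : IsProbabilityMeasure μ) (hνP : IsProbabilityMeasure ν)
    (T : ℝ → ℝ) (hTmono : Monotone T)
    (hT : ∀ x : ℝ, ∫ t in Iic x, Real.exp (-V t) = ∫ t in Iic (T x), Real.exp (-W t))
    (p ε : ℝ) (hp : 1 < p) (hε : 0 < ε)
    (hW' : ∀ x : ℝ, (-1 + ε) / (p - 1) ≤ x * deriv W x)
    (δ : ℝ) (hδ : 0 < δ)
    (hνmom : Integrable (fun x => |x| ^ (p * (p + δ) / δ)) ν)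
    (hV' : Integrable (fun x => |deriv V x| ^ (p + δ)) μ) :
    ContDiff ℝ 1 T ∧ Integrable (fun x => (deriv T x) ^ p) μ := by
  subst hμ hν
  exact stmt0_general hV hW hT hp hε hW' hδ hνmom hV'
end

section
/- Let V, W : ℝ → ℝ be twice continuously differentiable with e^{−V}dx and e^{−W}dx probability measures, and let T : ℝ → ℝ be the increasing transport map pushing e^{−V}dx onto e^{−W}dx. If there are constants C > 0 and K > 0 with V″(x) ≤ C and W″(x) ≥ K for all x ∈ ℝ, then T is Lipschitz and T′(x) ≤ √(C/K) for every x ∈ ℝ. -/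
open MeasureTheory Real Set

/-!
Differentiating the transport equation gives `T' = e^{-V} / e^{-W ∘ T}`, so for a constant `L` the
bound `T' ≤ L` says that `u = e^{-V} - L e^{-W ∘ T}` is nonpositive. Now `u' = e^{-V} p` with
`p = L W' ∘ T - V'`, and wherever `u > 0`, that is `T' > L`, one has
`p' = L (W'' ∘ T) T' - V'' ≥ L² W'' ∘ T - V'' ≥ 0`. Hence from a point where `u > 0`, the function
`u` keeps increasing to the right if `p ≥ 0` there, and to the left if `p ≤ 0`. So `e^{-V} ≥ u` is
bounded below by a positive constant on a half-line, contradicting integrability.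
-/

section Transport

lemma integrable_of_isFiniteMeasure_withDensity_ofReal {α : Type*} [MeasurableSpace α]
    {μ : Measure α} {f : α → ℝ} (hfm : AEStronglyMeasurable f μ) (hf : 0 ≤ᵐ[μ] f)
    (hfin : IsFiniteMeasure (μ.withDensity fun x => ENNReal.ofReal (f x))) : Integrable f μ := by
  rw [← lintegral_ofReal_ne_top_iff_integrable hfm hf, ← setLIntegral_univ,
    ← withDensity_apply _ MeasurableSet.univ]
  exact measure_ne_top _ _

lemma hasDerivAt_integral_Iic {E : Type*} [NormedAddCommGroup E] [NormedSpace ℝ E]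
    [CompleteSpace E] {f : ℝ → E} (hf : Integrable f) {x : ℝ} (hfx : ContinuousAt f x) :
    HasDerivAt (fun u => ∫ t in Iic u, f t) (f x) x := by
  have hsplit (u : ℝ) : ∫ t in Iic u, f t = (∫ t in x..u, f t) + ∫ t in Iic x, f t :=
    sub_eq_iff_eq_add.1 (intervalIntegral.integral_Iic_sub_Iic hf.integrableOn hf.integrableOn)
  rw [funext hsplit]
  exact (intervalIntegral.integral_hasDerivAt_right hf.intervalIntegrable
    hf.aestronglyMeasurable.stronglyMeasurableAtFilter hfx).add_const _

lemma hasDerivAt_of_comp_eq_of_injective {𝕜 : Type*} [NontriviallyNormedField 𝕜] [CompleteSpace 𝕜]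
    {F G G' T : 𝕜 → 𝕜} {F' x : 𝕜} (hG : ∀ y, HasStrictDerivAt G (G' y) y) (hG' : ∀ y, G' y ≠ 0)
    (hinj : Function.Injective G) (hF : HasDerivAt F F' x) (hFG : ∀ y, F y = G (T y)) :
    HasDerivAt T (F' / G' (T x)) x := by
  have hcont : Continuous G := continuous_iff_continuousAt.2 fun y => (hG y).hasDerivAt.continuousAt
  let e := (Topology.IsOpenEmbedding.of_continuous_injective_isOpenMap hcont hinj
    (isOpenMap_of_hasStrictDerivAt hG hG')).toOpenPartialHomeomorph G
  have hT (y : 𝕜) : T y = e.symm (F y) := by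
    rw [hFG]
    exact (e.left_inv (mem_univ (T y))).symm
  have hmem : F x ∈ e.target := by
    rw [hFG]
    exact e.map_source (mem_univ (T x))
  have hsymm : HasDerivAt e.symm (G' (T x))⁻¹ (F x) :=
    e.hasDerivAt_symm hmem (hG' _) (hT x ▸ (hG (T x)).hasDerivAt)
  rw [div_eq_inv_mul, funext hT]
  rw [funext hT] at hsymm
  exact hsymm.comp x hF

lemma hasDerivAt_transport {f g T : ℝ → ℝ} (hf : Integrable f) (hg : Integrable g)
    (hgc : Continuous g) (hgpos : ∀ y, 0 < g y)
    (hT : ∀ x, ∫ t in Iic x, f t = ∫ t in Iic (T x), g t) {x : ℝ} (hfx : ContinuousAt f x) :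
    HasDerivAt T (f x / g (T x)) x := by
  have hG (y : ℝ) : HasDerivAt (fun u => ∫ t in Iic u, g t) (g y) y :=
    hasDerivAt_integral_Iic hg hgc.continuousAt
  have hGmono : StrictMono fun u => ∫ t in Iic u, g t :=
    strictMono_of_hasDerivAt_pos hG hgpos
  exact hasDerivAt_of_comp_eq_of_injective
    (fun y => hasStrictDerivAt_of_hasDerivAt_of_continuousAt (.of_forall hG) hgc.continuousAt)
    (fun y => (hgpos y).ne') hGmono.injective (hasDerivAt_integral_Iic hf hfx) hT

end Transport

section MaximumPrinciple

variable {u w p : ℝ → ℝ}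

lemma monotoneOn_Icc_of_deriv_eq_mul {a b : ℝ} (hu : ∀ x, HasDerivAt u (w x * p x) x)
    (hw : ∀ x, 0 ≤ w x) (hp : Differentiable ℝ p) (hp' : ∀ x ∈ Ioo a b, 0 ≤ deriv p x)
    (hpa : 0 ≤ p a) : MonotoneOn u (Icc a b) := by
  have hpmono : MonotoneOn p (Icc a b) :=
    monotoneOn_of_deriv_nonneg (convex_Icc a b) hp.continuous.continuousOn hp.differentiableOn
      (by rwa [interior_Icc])
  refine monotoneOn_of_deriv_nonneg (convex_Icc a b)
    (fun x _ => (hu x).continuousAt.continuousWithinAt)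
    (fun x _ => (hu x).differentiableAt.differentiableWithinAt) fun x hx => ?_
  have hxab : x ∈ Icc a b := interior_subset hx
  have hpx : p a ≤ p x := hpmono (left_mem_Icc.2 (hxab.1.trans hxab.2)) hxab hxab.1
  rw [(hu x).deriv]
  exact mul_nonneg (hw x) (hpa.trans hpx)

lemma le_right_of_deriv_eq_mul_of_pos (hu : ∀ x, HasDerivAt u (w x * p x) x)
    (hw : ∀ x, 0 ≤ w x) (hp : Differentiable ℝ p) (hp' : ∀ x, 0 < u x → 0 ≤ deriv p x)
    {a b : ℝ} (hua : 0 < u a) (hpa : 0 ≤ p a) (hab : a ≤ b) : u a ≤ u b := by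
  have hcont : Continuous u := continuous_iff_continuousAt.2 fun x => (hu x).continuousAt
  have hle {c : ℝ} (hac : a ≤ c) (hpos : ∀ x ∈ Ico a c, 0 < u x) : u a ≤ u c :=
    monotoneOn_Icc_of_deriv_eq_mul hu hw hp (fun x hx => hp' x (hpos x (Ioo_subset_Ico_self hx)))
      hpa (left_mem_Icc.2 hac) (right_mem_Icc.2 hac) hac
  refine hle hab fun x hx => ?_
  by_contra! hux
  obtain ⟨c, ⟨hc, huc⟩, hcmin⟩ := (isCompact_Icc.inter_right
    (isClosed_le hcont continuous_const)).exists_isLeast ⟨x, Ico_subset_Icc_self hx, hux⟩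
  have hpos (y : ℝ) (hy : y ∈ Ico a c) : 0 < u y := by
    by_contra! huy
    exact hy.2.not_ge (hcmin ⟨⟨hy.1, hy.2.le.trans hc.2⟩, huy⟩)
  exact (hua.trans_le (hle hc.1 hpos)).not_ge huc

lemma le_left_of_deriv_eq_mul_of_pos (hu : ∀ x, HasDerivAt u (w x * p x) x)
    (hw : ∀ x, 0 ≤ w x) (hp : Differentiable ℝ p) (hp' : ∀ x, 0 < u x → 0 ≤ deriv p x)
    {a b : ℝ} (hua : 0 < u a) (hpa : p a ≤ 0) (hba : b ≤ a) : u a ≤ u b := by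
  have hu_neg (x : ℝ) : HasDerivAt (fun y => u (-y)) (w (-x) * -p (-x)) x := by
    have h := (hu (-x)).comp x (hasDerivAt_neg x)
    exact h.congr_deriv (by ring)
  have hp_neg (x : ℝ) : deriv (fun y => -p (-y)) x = deriv p (-x) := by
    rw [deriv.fun_neg, deriv_comp_neg, neg_neg]
  simpa only [neg_neg] using le_right_of_deriv_eq_mul_of_pos hu_neg (fun x => hw (-x))
    (hp.comp differentiable_neg).neg (fun x hx => (hp' (-x) hx).trans_eq (hp_neg x).symm)
    (a := -a) (b := -b) (by rwa [neg_neg]) (by rwa [neg_neg, neg_nonneg]) (neg_le_neg hba)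

lemma nonpos_of_deriv_eq_mul_of_le_integrable {f : ℝ → ℝ}
    (hu : ∀ x, HasDerivAt u (w x * p x) x) (hw : ∀ x, 0 ≤ w x) (hp : Differentiable ℝ p)
    (hp' : ∀ x, 0 < u x → 0 ≤ deriv p x) (hf : Integrable f) (huf : ∀ x, u x ≤ f x) (a : ℝ) :
    u a ≤ 0 := by
  by_contra! hua
  have hfin : volume {x | u a ≤ f x} < ⊤ := hf.measure_ge_lt_top hua
  rcases le_total 0 (p a) with hpa | hpa
  · have hsub : Ici a ⊆ {x | u a ≤ f x} := fun x hx =>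
      (le_right_of_deriv_eq_mul_of_pos hu hw hp hp' hua hpa hx).trans (huf x)
    exact ((measure_mono hsub).trans_lt hfin).ne volume_Ici
  · have hsub : Iic a ⊆ {x | u a ≤ f x} := fun x hx =>
      (le_left_of_deriv_eq_mul_of_pos hu hw hp hp' hua hpa hx).trans (huf x)
    exact ((measure_mono hsub).trans_lt hfin).ne volume_Iic

end MaximumPrinciple

section Contraction

variable {V W T : ℝ → ℝ} {L : ℝ}

lemma exp_neg_div_exp_neg_le_of_hasDerivAt (hV : Differentiable ℝ V)
    (hV' : Differentiable ℝ (deriv V)) (hW : Differentiable ℝ W)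
    (hW' : Differentiable ℝ (deriv W)) (hVint : Integrable fun x => exp (-V x))
    (hT : ∀ x, HasDerivAt T (exp (-V x) / exp (-W (T x))) x) (hL : 0 ≤ L)
    (hWT : ∀ x, 0 ≤ deriv (deriv W) (T x))
    (hVW : ∀ x, deriv (deriv V) x ≤ L ^ 2 * deriv (deriv W) (T x)) (x : ℝ) :
    exp (-V x) / exp (-W (T x)) ≤ L := by
  let u : ℝ → ℝ := fun y => exp (-V y) - L * exp (-W (T y))
  let p : ℝ → ℝ := fun y => L * deriv W (T y) - deriv V y
  have hu (y : ℝ) : HasDerivAt u (exp (-V y) * p y) y := by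
    have hWTy := ((hW (T y)).hasDerivAt.comp y (hT y)).fun_neg.exp.const_mul L
    refine ((hV y).hasDerivAt.fun_neg.exp.sub hWTy).congr_deriv ?_
    simp only [Function.comp_apply, p]
    field_simp
    ring
  have hp (y : ℝ) : HasDerivAt p (L * (deriv (deriv W) (T y) * (exp (-V y) / exp (-W (T y)))) -
      deriv (deriv V) y) y :=
    (((hW' (T y)).hasDerivAt.comp y (hT y)).const_mul L).sub (hV' y).hasDerivAt
  have hp' (y : ℝ) (hy : 0 < u y) : 0 ≤ deriv p y := by
    have hLT : L ≤ exp (-V y) / exp (-W (T y)) :=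
      (le_div_iff₀ (exp_pos _)).2 (sub_pos.1 hy).le
    rw [(hp y).deriv, sub_nonneg]
    calc deriv (deriv V) y ≤ L ^ 2 * deriv (deriv W) (T y) := hVW y
      _ = L * (deriv (deriv W) (T y) * L) := by ring
      _ ≤ L * (deriv (deriv W) (T y) * (exp (-V y) / exp (-W (T y)))) := by
        gcongr
        exact hWT y
  have hux : u x ≤ 0 := nonpos_of_deriv_eq_mul_of_le_integrable hu (fun y => (exp_pos _).le)
    (fun y => (hp y).differentiableAt) hp' hVint
    (fun y => sub_le_self _ (mul_nonneg hL (exp_pos _).le)) x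
  exact (div_le_iff₀ (exp_pos _)).2 (sub_nonpos.1 hux)

theorem stmt1_general (hV : Differentiable ℝ V) (hV' : Differentiable ℝ (deriv V))
    (hW : Differentiable ℝ W) (hW' : Differentiable ℝ (deriv W))
    (hVint : Integrable fun x => exp (-V x)) (hWint : Integrable fun x => exp (-W x))
    (hT : ∀ x, ∫ t in Iic x, exp (-V t) = ∫ t in Iic (T x), exp (-W t)) (hL : 0 ≤ L)
    (hWT : ∀ x, 0 ≤ deriv (deriv W) (T x))
    (hVW : ∀ x, deriv (deriv V) x ≤ L ^ 2 * deriv (deriv W) (T x)) :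
    LipschitzWith L.toNNReal T ∧ ∀ x, deriv T x ≤ L := by
  have hTderiv (x : ℝ) : HasDerivAt T (exp (-V x) / exp (-W (T x))) x :=
    hasDerivAt_transport hVint hWint hW.continuous.neg.rexp (fun y => exp_pos _) hT
      hV.continuous.neg.rexp.continuousAt
  have hle (x : ℝ) : exp (-V x) / exp (-W (T x)) ≤ L :=
    exp_neg_div_exp_neg_le_of_hasDerivAt hV hV' hW hW' hVint hTderiv hL hWT hVW x
  refine ⟨lipschitzWith_of_nnnorm_deriv_le (fun x => (hTderiv x).differentiableAt) fun x => ?_,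
    fun x => (hTderiv x).deriv.trans_le (hle x)⟩
  rw [← NNReal.coe_le_coe, coe_nnnorm, coe_toNNReal _ hL, (hTderiv x).deriv,
    norm_of_nonneg (by positivity)]
  exact hle x

end Contraction

/-- Let `V, W : ℝ → ℝ` be twice continuously differentiable with
`e^{-V} dx`, `e^{-W} dx` probability measures, and let `T` be the increasing transport
map pushing `e^{-V} dx` onto `e^{-W} dx`. If `V'' ≤ C` and `W'' ≥ K` for constants
`C, K > 0`, then `T` is Lipschitz with `T'(x) ≤ √(C/K)` for every `x`. -/
theorem stmt1
    (V W : ℝ → ℝ) (hV : ContDiff ℝ 2 V) (hW : ContDiff ℝ 2 W)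
    (μ ν : Measure ℝ)
    (hμ : μ = volume.withDensity (fun x => ENNReal.ofReal (Real.exp (-V x))))
    (hν : ν = volume.withDensity (fun x => ENNReal.ofReal (Real.exp (-W x))))
    (hμP : IsProbabilityMeasure μ) (hνP : IsProbabilityMeasure ν)
    (T : ℝ → ℝ) (hTmono : Monotone T)
    (hT : ∀ x : ℝ, ∫ t in Iic x, Real.exp (-V t) = ∫ t in Iic (T x), Real.exp (-W t))
    (C K : ℝ) (hC : 0 < C) (hK : 0 < K)
    (hVC : ∀ x : ℝ, deriv (deriv V) x ≤ C)
    (hWK : ∀ x : ℝ, K ≤ deriv (deriv W) x) :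
    LipschitzWith (Real.toNNReal (Real.sqrt (C / K))) T ∧
    ∀ x : ℝ, deriv T x ≤ Real.sqrt (C / K) := by
  subst hμ hν
  have hVint : Integrable fun x => exp (-V x) := integrable_of_isFiniteMeasure_withDensity_ofReal
    hV.continuous.neg.rexp.aestronglyMeasurable (.of_forall fun x => (exp_pos _).le) inferInstance
  have hWint : Integrable fun x => exp (-W x) := integrable_of_isFiniteMeasure_withDensity_ofReal
    hW.continuous.neg.rexp.aestronglyMeasurable (.of_forall fun x => (exp_pos _).le) inferInstance
  have hCK (x : ℝ) : C ≤ √(C / K) ^ 2 * deriv (deriv W) (T x) := by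
    rw [sq_sqrt (by positivity), ← div_le_iff₀' (by positivity), div_div_cancel₀ hC.ne']
    exact hWK (T x)
  exact stmt1_general (hV.differentiable two_ne_zero) hV.differentiable_deriv_two
    (hW.differentiable two_ne_zero) hW.differentiable_deriv_two hVint hWint hT (sqrt_nonneg _)
    (fun x => hK.le.trans (hWK (T x))) (fun x => (hVC x).trans (hCK x))
end

section
/- Let ν = ρ dx be a probability measure on ℝ^d with ρ ∈ W^{1,1}_loc(ℝ^d) and let p ≥ 1 be such that ∫_{{ρ>0}} (‖∇ρ‖/ρ)^p ρ dx < ∞ (with the convention ∇ρ/ρ := 0 on {ρ = 0}). Then there exists a sequence of probability densities ρ_n on ℝ^d such that: (1) the measures ρ_n dx converge to ν in total variation; (2) ∫ (‖∇ρ_n‖/ρ_n)^p ρ_n dx → ∫_{{ρ>0}} (‖∇ρ‖/ρ)^p ρ dx (with the same convention on {ρ_n = 0}); (3) every ρ_n is C^∞ and nonnegative; (4) for every i and n the partial derivative ∂_{x_i}ρ_n is bounded and Lebesgue-integrable on ℝ^d. -/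
open MeasureTheory Real Set

noncomputable section

/-- ℓ² norm of a vector in `Fin d → ℝ`. -/
def l2norm {d : ℕ} (v : Fin d → ℝ) : ℝ := Real.sqrt (∑ i, v i ^ 2)

/-- Test functions on ℝ^d. -/
def IsTest {d : ℕ} (φ : (Fin d → ℝ) → ℝ) : Prop :=
  ContDiff ℝ (⊤ : ℕ∞) φ ∧ HasCompactSupport φ

/-- i-th partial derivative. -/
def pd {d : ℕ} (i : Fin d) (f : (Fin d → ℝ) → ℝ) (x : Fin d → ℝ) : ℝ :=
  fderiv ℝ f x (Pi.single i 1)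

/-!
Mollify: `ρₙ = φₙ ⋆ ρ`, whose gradient is `φₙ ⋆ ∇ρ`. The function `(v, r) ↦ (‖v‖ / r) ^ p * r` is
jointly convex and positively homogeneous, so Jensen's inequality bounds the energy density of `ρₙ`
by the mollified energy density of `ρ`. The latter converges in `L¹`, and dominated convergence with
varying dominating functions gives convergence of the energies. Jensen's inequality requires
`∇ρ = 0` a.e. on `{ρ = 0}`, a general property of weak derivatives. Finally, finite energy
makes `∇ρ` integrable, hence its mollifications are bounded and integrable.
-/

open Filter Topology
open scoped Convolution ContDiff NNReal

section LOneConvergence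

variable {α ι F : Type*} [MeasurableSpace α] {μ : Measure α} [NormedAddCommGroup F]
  {l : Filter ι} [l.IsCountablyGenerated]

theorem tendsto_integral_norm_sub_of_tendsto_integral {G : ι → α → ℝ} {g : α → ℝ}
    (hG : ∀ i, Integrable (G i) μ) (hG0 : ∀ i, 0 ≤ᵐ[μ] G i) (hg : Integrable g μ)
    (hlim : ∀ᵐ x ∂μ, Tendsto (fun i => G i x) l (𝓝 (g x)))
    (hint : Tendsto (fun i => ∫ x, G i x ∂μ) l (𝓝 (∫ x, g x ∂μ))) :
    Tendsto (fun i => ∫ x, ‖G i x - g x‖ ∂μ) l (𝓝 0) := by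
  have hdeficit_int : ∀ i, Integrable (fun x => max (g x - G i x) 0) μ := fun i =>
    (hg.sub (hG i)).pos_part
  have hdeficit : Tendsto (fun i => ∫ x, max (g x - G i x) 0 ∂μ) l (𝓝 0) := by
    suffices h : Tendsto (fun i => ∫ x, max (g x - G i x) 0 ∂μ) l (𝓝 (∫ _, 0 ∂μ)) by simpa using h
    refine tendsto_integral_filter_of_dominated_convergence (fun x => ‖g x‖)
      (.of_forall fun i => (hdeficit_int i).aestronglyMeasurable)
      (.of_forall fun i => ?_) hg.norm ?_
    · filter_upwards [hG0 i] with x hx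
      have hx' : 0 ≤ G i x := hx
      rw [Real.norm_of_nonneg (le_max_right _ _)]
      exact max_le (by linarith [Real.le_norm_self (g x)]) (norm_nonneg _)
    · filter_upwards [hlim] with x hx
      simpa using (hx.const_sub (g x)).max (tendsto_const_nhds (x := (0 : ℝ)))
  have hsplit : ∀ i, ∫ x, ‖G i x - g x‖ ∂μ
      = 2 * ∫ x, max (g x - G i x) 0 ∂μ + (∫ x, G i x ∂μ - ∫ x, g x ∂μ) := fun i => by
    have hdiff : Integrable (fun x => G i x - g x) μ := (hG i).sub hg
    rw [← integral_const_mul, ← integral_sub (hG i) hg,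
      ← integral_add ((hdeficit_int i).const_mul 2) hdiff]
    refine integral_congr_ae (.of_forall fun x => ?_)
    simp only [Real.norm_eq_abs]
    grind
  simp_rw [hsplit]
  simpa using (hdeficit.const_mul 2).add (hint.sub_const (∫ x, g x ∂μ))

theorem tendsto_integral_norm_sub_of_dominated {u : ι → α → F} {f : α → F} {G : ι → α → ℝ}
    {g : α → ℝ} (hu : ∀ i, AEStronglyMeasurable (u i) μ) (hf : Integrable f μ)
    (hG : ∀ i, Integrable (G i) μ) (hg : Integrable g μ)
    (hGg : Tendsto (fun i => ∫ x, ‖G i x - g x‖ ∂μ) l (𝓝 0))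
    (hbound : ∀ i, ∀ᵐ x ∂μ, ‖u i x‖ ≤ G i x)
    (hlim : ∀ᵐ x ∂μ, Tendsto (fun i => u i x) l (𝓝 (f x))) :
    Tendsto (fun i => ∫ x, ‖u i x - f x‖ ∂μ) l (𝓝 0) := by
  have hdom : Integrable (fun x => ‖g x‖ + ‖f x‖) μ := hg.norm.add hf.norm
  have hmeas : ∀ i, AEStronglyMeasurable (fun x => ‖u i x - f x‖) μ := fun i =>
    ((hu i).sub hf.aestronglyMeasurable).norm
  have hmin_le : ∀ i x, ‖min ‖u i x - f x‖ (‖g x‖ + ‖f x‖)‖ ≤ ‖g x‖ + ‖f x‖ := fun i x => by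
    rw [Real.norm_of_nonneg (by positivity)]
    exact min_le_right _ _
  have hmin_meas : ∀ i, AEStronglyMeasurable (fun x => min ‖u i x - f x‖ (‖g x‖ + ‖f x‖)) μ :=
    fun i => (hmeas i).inf hdom.aestronglyMeasurable
  have hmin_int : ∀ i, Integrable (fun x => min ‖u i x - f x‖ (‖g x‖ + ‖f x‖)) μ := fun i =>
    hdom.mono' (hmin_meas i) (.of_forall (hmin_le i))
  have hmin : Tendsto (fun i => ∫ x, min ‖u i x - f x‖ (‖g x‖ + ‖f x‖) ∂μ) l (𝓝 0) := by
    suffices h : Tendsto (fun i => ∫ x, min ‖u i x - f x‖ (‖g x‖ + ‖f x‖) ∂μ) l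
        (𝓝 (∫ _, 0 ∂μ)) by simpa using h
    refine tendsto_integral_filter_of_dominated_convergence _ (.of_forall hmin_meas)
      (.of_forall fun i => .of_forall (hmin_le i)) hdom ?_
    filter_upwards [hlim] with x hx
    refine squeeze_zero (fun i => by positivity) (fun i => min_le_left _ _) ?_
    exact tendsto_iff_norm_sub_tendsto_zero.1 hx
  have hGdiff : ∀ i, Integrable (fun x => ‖G i x - g x‖) μ := fun i => ((hG i).sub hg).norm
  have hsum := hmin.add hGg
  rw [add_zero] at hsum
  refine squeeze_zero (fun i => by positivity) (fun i => ?_) hsum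
  rw [← integral_add (hmin_int i) (hGdiff i)]
  refine integral_mono_of_nonneg (.of_forall fun x => norm_nonneg _)
    ((hmin_int i).add (hGdiff i)) ?_
  filter_upwards [hbound i] with x hx
  have htriangle := norm_sub_le (u i x) (f x)
  have hGle : G i x ≤ ‖g x‖ + ‖G i x - g x‖ := by
    linarith [Real.le_norm_self (g x), Real.le_norm_self (G i x - g x)]
  have hnonneg := norm_nonneg (G i x - g x)
  grind

end LOneConvergence

section LocalLOneConvergence

variable {X ι F : Type*} [TopologicalSpace X] [MeasurableSpace X] {μ : Measure X}
  [NormedAddCommGroup F] {l : Filter ι}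

/-- Convergence `u → f` along `l` in `L¹_loc(μ)`. It is only meaningful for locally integrable
`u i` and `f`, as the Bochner integral of a non-integrable function is `0`. -/
def TendstoLOneLoc (μ : Measure X) (u : ι → X → F) (l : Filter ι) (f : X → F) : Prop :=
  ∀ K, IsCompact K → Tendsto (fun i => ∫ x in K, ‖u i x - f x‖ ∂μ) l (𝓝 0)

namespace TendstoLOneLoc

theorem const (f : X → F) (l : Filter ι) : TendstoLOneLoc μ (fun _ : ι => f) l f := fun K _ => by
  simpa using tendsto_const_nhds

theorem comp_lipschitzWith {F' : Type*} [NormedAddCommGroup F'] {u : ι → X → F} {f : X → F}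
    (h : TendstoLOneLoc μ u l f) (hu : ∀ i, LocallyIntegrable (u i) μ)
    (hf : LocallyIntegrable f μ) {ψ : F → F'} {C : ℝ≥0} (hψ : LipschitzWith C ψ) :
    TendstoLOneLoc μ (fun i x => ψ (u i x)) l (fun x => ψ (f x)) := fun K hK => by
  refine squeeze_zero (fun i => by positivity) (fun i => ?_)
    (by simpa using (h K hK).const_mul (C : ℝ))
  rw [← integral_const_mul]
  refine integral_mono_of_nonneg (.of_forall fun x => norm_nonneg _)
    ((((hu i).sub hf).integrableOn_isCompact hK).norm.const_mul _)
    (.of_forall fun x => hψ.norm_sub_le _ _)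

theorem of_dominated [l.IsCountablyGenerated] {u : ι → X → F} {f : X → F} {G : ι → X → ℝ}
    {g : X → ℝ} (hGg : TendstoLOneLoc μ G l g)
    (hu : ∀ i, AEStronglyMeasurable (u i) μ) (hf : LocallyIntegrable f μ)
    (hG : ∀ i, LocallyIntegrable (G i) μ) (hg : LocallyIntegrable g μ)
    (hbound : ∀ i, ∀ᵐ x ∂μ, ‖u i x‖ ≤ G i x)
    (hlim : ∀ᵐ x ∂μ, Tendsto (fun i => u i x) l (𝓝 (f x))) :
    TendstoLOneLoc μ u l f := fun _ hK =>
  tendsto_integral_norm_sub_of_dominated (fun i => (hu i).restrict)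
    (hf.integrableOn_isCompact hK) (fun i => (hG i).integrableOn_isCompact hK)
    (hg.integrableOn_isCompact hK) (hGg _ hK) (fun i => ae_restrict_of_ae (hbound i))
    (ae_restrict_of_ae hlim)

theorem tendsto_integral_smul [TopologicalSpace.MetrizableSpace X] [OpensMeasurableSpace X]
    [NormedSpace ℝ F] {u : ι → X → F} {f : X → F} (h : TendstoLOneLoc μ u l f)
    (hu : ∀ i, LocallyIntegrable (u i) μ) (hf : LocallyIntegrable f μ)
    {χ : X → ℝ} (hχ : Continuous χ) (hχs : HasCompactSupport χ) :
    Tendsto (fun i => ∫ x, χ x • u i x ∂μ) l (𝓝 (∫ x, χ x • f x ∂μ)) := by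
  obtain ⟨C, hC⟩ := hχs.exists_bound_of_continuous hχ
  refine tendsto_iff_norm_sub_tendsto_zero.2 (squeeze_zero (fun i => norm_nonneg _) (fun i => ?_)
    (by simpa using (h _ hχs.isCompact).const_mul C))
  have hdiff : ∫ x, χ x • u i x ∂μ - ∫ x, χ x • f x ∂μ
      = ∫ x in tsupport χ, χ x • (u i x - f x) ∂μ := by
    rw [← integral_sub ((hu i).integrable_smul_left_of_hasCompactSupport hχ hχs)
      (hf.integrable_smul_left_of_hasCompactSupport hχ hχs),
      setIntegral_eq_integral_of_forall_compl_eq_zero fun x hx => by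
        rw [image_eq_zero_of_notMem_tsupport hx, zero_smul]]
    simp_rw [smul_sub]
  rw [hdiff, ← integral_const_mul]
  refine norm_integral_le_of_norm_le
    ((((hu i).sub hf).integrableOn_isCompact hχs.isCompact).norm.const_mul C)
    (.of_forall fun x => ?_)
  rw [norm_smul]
  exact mul_le_mul_of_nonneg_right (hC x) (norm_nonneg _)

end TendstoLOneLoc

variable [SecondCountableTopology X]

theorem locallyIntegrable_bdd_smul [NormedSpace ℝ F] {b : X → ℝ} {f : X → F} {C : ℝ}
    (hf : LocallyIntegrable f μ) (hb : AEStronglyMeasurable b μ) (hbC : ∀ x, ‖b x‖ ≤ C) :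
    LocallyIntegrable (fun x => b x • f x) μ := by
  refine (hf.smul C).mono (hb.smul hf.aestronglyMeasurable) (.of_forall fun x => ?_)
  rw [Pi.smul_apply, norm_smul, norm_smul]
  exact mul_le_mul_of_nonneg_right ((hbC x).trans (le_abs_self C)) (norm_nonneg _)

theorem locallyIntegrable_comp_of_lipschitzWith [IsLocallyFiniteMeasure μ] {F' : Type*}
    [NormedAddCommGroup F'] {f : X → F} (hf : LocallyIntegrable f μ) {ψ : F → F'} {C : ℝ≥0}
    (hψ : LipschitzWith C ψ) : LocallyIntegrable (fun x => ψ (f x)) μ := by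
  have hdom : LocallyIntegrable (fun x => (C : ℝ) * ‖f x‖ + ‖ψ 0‖) μ := fun x =>
    ((hf x).norm.smul (C : ℝ)).add (locallyIntegrable_const ‖ψ 0‖ x)
  refine hdom.mono (hψ.continuous.comp_aestronglyMeasurable hf.aestronglyMeasurable)
    (.of_forall fun x => ?_)
  rw [Real.norm_of_nonneg (by positivity)]
  calc ‖ψ (f x)‖ ≤ ‖ψ (f x) - ψ 0‖ + ‖ψ 0‖ := norm_le_norm_sub_add _ _
    _ ≤ C * ‖f x‖ + ‖ψ 0‖ := by simpa using hψ.norm_sub_le (f x) 0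

theorem TendstoLOneLoc.bdd_smul [IsLocallyFiniteMeasure μ] [NormedSpace ℝ F]
    [l.IsCountablyGenerated] {b : ι → X → ℝ} {b₀ : X → ℝ} {u : ι → X → F} {f : X → F} {C : ℝ}
    (h : TendstoLOneLoc μ u l f)
    (hu : ∀ i, LocallyIntegrable (u i) μ) (hf : LocallyIntegrable f μ)
    (hb : ∀ i, AEStronglyMeasurable (b i) μ) (hb₀ : AEStronglyMeasurable b₀ μ)
    (hbC : ∀ i x, ‖b i x‖ ≤ C) (hb₀C : ∀ x, ‖b₀ x‖ ≤ C)
    (hblim : ∀ᵐ x ∂μ, Tendsto (fun i => b i x) l (𝓝 (b₀ x)))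
    (hulim : ∀ᵐ x ∂μ, Tendsto (fun i => u i x) l (𝓝 (f x))) :
    TendstoLOneLoc μ (fun i x => b i x • u i x) l (fun x => b₀ x • f x) := by
  have hC : LipschitzWith _ fun z : F => C • ‖z‖ :=
    (lipschitzWith_smul C).comp lipschitzWith_one_norm
  refine (h.comp_lipschitzWith hu hf hC).of_dominated
    (fun i => (hb i).smul (hu i).aestronglyMeasurable) (locallyIntegrable_bdd_smul hf hb₀ hb₀C)
    (fun i => locallyIntegrable_comp_of_lipschitzWith (hu i) hC)
    (locallyIntegrable_comp_of_lipschitzWith hf hC) (fun i => .of_forall fun x => ?_) ?_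
  · rw [norm_smul]
    exact mul_le_mul_of_nonneg_right (hbC i x) (norm_nonneg _)
  · filter_upwards [hblim, hulim] with x hbx hux using hbx.smul hux

end LocalLOneConvergence

section RelativeEnergy

/-- The integrand `(a / r) ^ p * r` of the Fisher-type functional, for a gradient of norm `a` and a
density `r`. It vanishes at `r = 0`, in accordance with the convention `∇ρ / ρ = 0` on `{ρ = 0}`. -/
def relEnergy (p a r : ℝ) : ℝ := (a / r) ^ p * r

variable {p a r : ℝ}

theorem relEnergy_zero_right (p a : ℝ) : relEnergy p a 0 = 0 := by simp [relEnergy]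

theorem relEnergy_of_not_pos (hr0 : 0 ≤ r) (hr : ¬0 < r) : relEnergy p a r = 0 := by
  rw [hr0.antisymm' (not_lt.1 hr), relEnergy_zero_right]

theorem relEnergy_nonneg (ha : 0 ≤ a) (hr : 0 ≤ r) : 0 ≤ relEnergy p a r :=
  mul_nonneg (rpow_nonneg (div_nonneg ha hr) p) hr

theorem relEnergy_mul (p c a r : ℝ) : relEnergy p (c * a) (c * r) = c * relEnergy p a r := by
  rcases eq_or_ne c 0 with rfl | hc
  · simp [relEnergy]
  · rw [relEnergy, relEnergy, mul_div_mul_left a r hc]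
    ring

theorem rpow_add_mul_sub_le_rpow {s u : ℝ} (hp : 1 ≤ p) (hs : 0 ≤ s) (hu : 0 ≤ u) :
    s ^ p + p * s ^ (p - 1) * (u - s) ≤ u ^ p := by
  rcases hs.eq_or_lt with rfl | hs
  · rcases hp.eq_or_lt with rfl | hp
    · simp
    · rw [zero_rpow (by linarith), zero_rpow (by linarith)]
      simpa using rpow_nonneg hu p
  · have hbernoulli : 1 + p * (u / s - 1) ≤ (u / s) ^ p := by
      simpa using one_add_mul_self_le_rpow_one_add (s := u / s - 1)
        (by linarith [div_nonneg hu hs.le]) hp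
    rw [div_rpow hu hs.le, le_div_iff₀ (by positivity)] at hbernoulli
    calc s ^ p + p * s ^ (p - 1) * (u - s) = (1 + p * (u / s - 1)) * s ^ p := by
          rw [rpow_sub_one hs.ne']
          field_simp
      _ ≤ u ^ p := hbernoulli

-- `relEnergy p` is the supremum of these affine functions of `(a, r)`, attained at `s = a / r`.
theorem affine_le_relEnergy {s : ℝ} (hp : 1 ≤ p) (hs : 0 ≤ s) (ha : 0 ≤ a) (hr : 0 ≤ r)
    (h0 : r = 0 → a = 0) :
    s ^ p * r + p * s ^ (p - 1) * (a - s * r) ≤ relEnergy p a r := by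
  rcases hr.eq_or_lt' with rfl | hr
  · simp [relEnergy, h0]
  · calc s ^ p * r + p * s ^ (p - 1) * (a - s * r)
        = (s ^ p + p * s ^ (p - 1) * (a / r - s)) * r := by field_simp
      _ ≤ relEnergy p a r :=
        mul_le_mul_of_nonneg_right (rpow_add_mul_sub_le_rpow hp hs (by positivity)) hr.le

theorem le_relEnergy_add (hp : 1 ≤ p) (ha : 0 ≤ a) (hr : 0 ≤ r) (h0 : r = 0 → a = 0) :
    a ≤ relEnergy p a r + (p - 1) * r := by
  have haffine := affine_le_relEnergy hp zero_le_one ha hr h0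
  rw [one_rpow, one_rpow] at haffine
  linarith [le_mul_of_one_le_left ha hp]

variable {α F : Type*} [MeasurableSpace α] {μ : Measure α} [NormedAddCommGroup F]
  {f : α → ℝ} {G : α → F}

theorem integrableOn_pos_relEnergy_iff (hf0 : 0 ≤ f) :
    IntegrableOn (fun x => relEnergy p ‖G x‖ (f x)) {x | 0 < f x} μ
      ↔ Integrable (fun x => relEnergy p ‖G x‖ (f x)) μ :=
  integrableOn_iff_integrable_of_support_subset
    (Function.support_subset_iff'.2 fun _ => relEnergy_of_not_pos (hf0 _))

theorem setIntegral_pos_relEnergy (hf0 : 0 ≤ f) :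
    ∫ x in {x | 0 < f x}, relEnergy p ‖G x‖ (f x) ∂μ = ∫ x, relEnergy p ‖G x‖ (f x) ∂μ :=
  setIntegral_eq_integral_of_forall_compl_eq_zero fun _ => relEnergy_of_not_pos (hf0 _)

theorem integrable_of_integrable_relEnergy (hp : 1 ≤ p) (hf0 : 0 ≤ᵐ[μ] f) (hf : Integrable f μ)
    (hG : AEStronglyMeasurable G μ) (h0 : ∀ᵐ x ∂μ, f x = 0 → G x = 0)
    (hE : Integrable (fun x => relEnergy p ‖G x‖ (f x)) μ) : Integrable G μ := by
  refine (hE.add (hf.const_mul (p - 1))).mono' hG ?_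
  filter_upwards [hf0, h0] with x hfx h0x
  exact le_relEnergy_add hp (norm_nonneg _) hfx fun h => by rw [h0x h, norm_zero]

-- Jensen's inequality for the jointly convex function `(v, r) ↦ relEnergy p ‖v‖ r`: integrate the
-- affine minorant that touches at the mean values.
theorem relEnergy_norm_integral_le [NormedSpace ℝ F] (hp : 1 ≤ p) (hf0 : 0 ≤ᵐ[μ] f)
    (hf : Integrable f μ) (hG : Integrable G μ) (h0 : ∀ᵐ x ∂μ, f x = 0 → G x = 0)
    (hE : Integrable (fun x => relEnergy p ‖G x‖ (f x)) μ) :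
    relEnergy p ‖∫ x, G x ∂μ‖ (∫ x, f x ∂μ) ≤ ∫ x, relEnergy p ‖G x‖ (f x) ∂μ := by
  rcases (integral_nonneg_of_ae hf0).eq_or_lt' with hR | hR
  · rw [hR, relEnergy_zero_right]
    refine integral_nonneg_of_ae ?_
    filter_upwards [hf0] with x hfx using relEnergy_nonneg (norm_nonneg _) hfx
  set R := ∫ x, f x ∂μ
  set s := ‖∫ x, G x ∂μ‖ / R
  have hs : 0 ≤ s := by positivity
  have hsR : s * R ≤ ∫ x, ‖G x‖ ∂μ := by
    rw [div_mul_cancel₀ _ hR.ne']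
    exact norm_integral_le_integral_norm G
  have hdiff : Integrable (fun x => ‖G x‖ - s * f x) μ := hG.norm.sub (hf.const_mul s)
  calc relEnergy p ‖∫ x, G x ∂μ‖ R = s ^ p * R := rfl
    _ ≤ s ^ p * R + p * s ^ (p - 1) * (∫ x, ‖G x‖ ∂μ - s * R) :=
      le_add_of_nonneg_right (mul_nonneg (by positivity) (sub_nonneg.2 hsR))
    _ = ∫ x, (s ^ p * f x + p * s ^ (p - 1) * (‖G x‖ - s * f x)) ∂μ := by
      rw [integral_add (hf.const_mul _) (hdiff.const_mul _), integral_const_mul,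
        integral_const_mul, integral_sub hG.norm (hf.const_mul s), integral_const_mul]
    _ ≤ ∫ x, relEnergy p ‖G x‖ (f x) ∂μ := by
      refine integral_mono_ae ((hf.const_mul _).add (hdiff.const_mul _)) hE ?_
      filter_upwards [hf0, h0] with x hfx h0x
      exact affine_le_relEnergy hp hs (norm_nonneg _) hfx fun h => by rw [h0x h, norm_zero]

end RelativeEnergy

section Mollification

theorem exists_seq_contDiffBump_tendsto_rOut (E : Type*) [NormedAddCommGroup E] :
    ∃ φ : ℕ → ContDiffBump (0 : E), Tendsto (fun n => (φ n).rOut) atTop (𝓝 0) ∧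
      ∀ n, (φ n).rOut ≤ 2 * (φ n).rIn := by
  have hpos : ∀ n : ℕ, (0 : ℝ) < 1 / (n + 1) := fun n => Nat.one_div_pos_of_nat
  refine ⟨fun n => ⟨1 / (n + 1), 2 * (1 / (n + 1)), hpos n, by linarith [hpos n]⟩, ?_,
    fun n => le_rfl⟩
  simpa using (tendsto_one_div_add_atTop_nhds_zero_nat (𝕜 := ℝ)).const_mul 2

variable {E F F' ι : Type*} [NormedAddCommGroup E] [NormedSpace ℝ E] [FiniteDimensional ℝ E]
  [MeasurableSpace E] {μ : Measure E} [NormedAddCommGroup F] [NormedSpace ℝ F]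
  [NormedAddCommGroup F'] [NormedSpace ℝ F']

/-- The mollification of `f` by the bump function `φ`, normalized to have `μ`-integral `1`. -/
def mollify (φ : ContDiffBump (0 : E)) (μ : Measure E) (f : E → F) : E → F :=
  φ.normed μ ⋆[ContinuousLinearMap.lsmul ℝ ℝ, μ] f

variable [BorelSpace E] [μ.IsAddHaarMeasure] {φ : ContDiffBump (0 : E)} {f g : E → F}

theorem mollify_eq_integral (φ : ContDiffBump (0 : E)) (μ : Measure E) [μ.IsAddHaarMeasure]
    (f : E → F) (x : E) : mollify φ μ f x = ∫ t, φ.normed μ (x - t) • f t ∂μ :=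
  convolution_lsmul_swap

theorem integrable_normed_sub_smul (φ : ContDiffBump (0 : E)) (hf : LocallyIntegrable f μ)
    (x : E) : Integrable (fun t => φ.normed μ (x - t) • f t) μ :=
  hf.integrable_smul_left_of_hasCompactSupport (φ.continuous_normed.comp (by fun_prop))
    (φ.hasCompactSupport_normed.comp_homeomorph (Homeomorph.subLeft x))

theorem mollify_congr {x : E} (h : ∀ t ∈ Metric.ball x φ.rOut, f t = g t) :
    mollify φ μ f x = mollify φ μ g x := by
  rw [mollify_eq_integral, mollify_eq_integral]
  congr 1 with t
  by_cases ht : t ∈ Metric.ball x φ.rOut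
  · rw [h t ht]
  · have hzero : φ.normed μ (x - t) = 0 := by
      rwa [← Function.notMem_support, φ.support_normed_eq, mem_ball_zero_iff, ← dist_eq_norm,
        dist_comm, ← Metric.mem_ball]
    rw [hzero, zero_smul, zero_smul]

theorem norm_mollify_le (φ : ContDiffBump (0 : E)) (μ : Measure E) [μ.IsAddHaarMeasure]
    (f : E → F) (x : E) : ‖mollify φ μ f x‖ ≤ mollify φ μ (fun y => ‖f y‖) x := by
  rw [mollify_eq_integral, mollify_eq_integral]
  refine (norm_integral_le_integral_norm _).trans_eq (integral_congr_ae (.of_forall fun t => ?_))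
  simp only [norm_smul, Real.norm_of_nonneg (φ.nonneg_normed _), smul_eq_mul]

theorem mollify_nonneg (φ : ContDiffBump (0 : E)) {f : E → ℝ} (hf : 0 ≤ᵐ[μ] f) (x : E) :
    0 ≤ mollify φ μ f x := by
  rw [mollify_eq_integral]
  refine integral_nonneg_of_ae ?_
  filter_upwards [hf] with t ht using mul_nonneg (φ.nonneg_normed _) ht

theorem contDiff_mollify (φ : ContDiffBump (0 : E)) (hf : LocallyIntegrable f μ) :
    ContDiff ℝ ∞ (mollify φ μ f) :=
  φ.hasCompactSupport_normed.contDiff_convolution_left _ φ.contDiff_normed hf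

theorem map_mollify [CompleteSpace F] [CompleteSpace F'] (L : F →L[ℝ] F')
    (φ : ContDiffBump (0 : E)) (hf : LocallyIntegrable f μ) (x : E) :
    L (mollify φ μ f x) = mollify φ μ (fun y => L (f y)) x := by
  rw [mollify_eq_integral, mollify_eq_integral,
    ← L.integral_comp_comm (integrable_normed_sub_smul φ hf x)]
  simp_rw [map_smul]

theorem integrable_mollify (φ : ContDiffBump (0 : E)) (hf : Integrable f μ) :
    Integrable (mollify φ μ f) μ :=
  φ.integrable_normed.integrable_convolution _ hf

theorem integral_mollify [CompleteSpace F] (φ : ContDiffBump (0 : E)) (hf : Integrable f μ) :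
    ∫ x, mollify φ μ f x ∂μ = ∫ x, f x ∂μ := by
  refine (integral_convolution _ φ.integrable_normed hf).trans ?_
  rw [φ.integral_normed, ContinuousLinearMap.lsmul_apply, one_smul]

theorem norm_mollify_le_integral_norm (φ : ContDiffBump (0 : E)) (hf : Integrable f μ) (x : E) :
    ‖mollify φ μ f x‖ ≤ 1 / μ.real (Metric.closedBall 0 φ.rIn) * ∫ t, ‖f t‖ ∂μ := by
  rw [mollify_eq_integral, ← integral_const_mul]
  refine norm_integral_le_of_norm_le (hf.norm.const_mul _) (.of_forall fun t => ?_)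
  rw [norm_smul, Real.norm_of_nonneg (φ.nonneg_normed _)]
  exact mul_le_mul_of_nonneg_right (φ.normed_le_div_measure_closedBall_rIn μ _) (norm_nonneg _)

variable {φ : ι → ContDiffBump (0 : E)} {l : Filter ι} {K : ℝ}

theorem ae_tendsto_mollify [CompleteSpace F] (hφ : Tendsto (fun i => (φ i).rOut) l (𝓝 0))
    (hφK : ∀ᶠ i in l, (φ i).rOut ≤ K * (φ i).rIn) (hf : LocallyIntegrable f μ) :
    ∀ᵐ x ∂μ, Tendsto (fun i => mollify (φ i) μ f x) l (𝓝 (f x)) :=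
  ContDiffBump.ae_convolution_tendsto_right_of_locallyIntegrable hφ hφK hf

variable [l.IsCountablyGenerated]

-- The mollification of `f` is dominated by that of `‖f‖`, to which Scheffé's lemma applies because
-- mollification preserves integrals.
theorem tendsto_integral_norm_mollify_sub [CompleteSpace F]
    (hφ : Tendsto (fun i => (φ i).rOut) l (𝓝 0)) (hφK : ∀ᶠ i in l, (φ i).rOut ≤ K * (φ i).rIn)
    (hf : Integrable f μ) :
    Tendsto (fun i => ∫ x, ‖mollify (φ i) μ f x - f x‖ ∂μ) l (𝓝 0) := by
  have hnorm : Tendsto (fun i => ∫ x, ‖mollify (φ i) μ (fun y => ‖f y‖) x - ‖f x‖‖ ∂μ) l (𝓝 0) :=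
    tendsto_integral_norm_sub_of_tendsto_integral (fun i => integrable_mollify (φ i) hf.norm)
      (fun i => .of_forall (mollify_nonneg (φ i) (.of_forall fun y => norm_nonneg _)))
      hf.norm (ae_tendsto_mollify hφ hφK hf.norm.locallyIntegrable)
      (by simp_rw [integral_mollify _ hf.norm]; exact tendsto_const_nhds)
  exact tendsto_integral_norm_sub_of_dominated
    (fun i => (integrable_mollify (φ i) hf).aestronglyMeasurable) hf
    (fun i => integrable_mollify (φ i) hf.norm) hf.norm hnorm
    (fun i => .of_forall (norm_mollify_le (φ i) μ f))
    (ae_tendsto_mollify hφ hφK hf.locallyIntegrable)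

theorem tendstoLOneLoc_mollify [CompleteSpace F]
    (hφ : Tendsto (fun i => (φ i).rOut) l (𝓝 0)) (hφK : ∀ᶠ i in l, (φ i).rOut ≤ K * (φ i).rIn)
    (hf : LocallyIntegrable f μ) : TendstoLOneLoc μ (fun i => mollify (φ i) μ f) l f := by
  intro S hS
  let T := Metric.cthickening 1 S
  have hT : IsCompact T := hS.cthickening
  have hfT : Integrable (T.indicator f) μ :=
    (hf.integrableOn_isCompact hT).integrable_indicator hT.measurableSet
  refine squeeze_zero' (.of_forall fun i => by positivity) ?_
    (tendsto_integral_norm_mollify_sub hφ hφK hfT)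
  filter_upwards [hφ.eventually_le_const one_pos] with i hi
  have hagree : ∀ x ∈ S, mollify (φ i) μ f x - f x
      = mollify (φ i) μ (T.indicator f) x - T.indicator f x := fun x hx => by
    rw [indicator_of_mem (Metric.self_subset_cthickening S hx), mollify_congr fun t ht => ?_]
    exact (indicator_of_mem (Metric.closedBall_subset_cthickening hx 1
      (Metric.ball_subset_closedBall (Metric.ball_subset_ball hi ht))) f).symm
  rw [setIntegral_congr_fun hS.measurableSet fun x hx => congrArg norm (hagree x hx)]
  exact setIntegral_le_integral ((integrable_mollify (φ i) hfT).sub hfT).norm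
    (.of_forall fun x => norm_nonneg _)

end Mollification

section ArctanRescaling

theorem hasDerivAt_arctan_mul_div {c : ℝ} (hc : c ≠ 0) (s : ℝ) :
    HasDerivAt (fun s => arctan (c * s) / c) (1 / (1 + (c * s) ^ 2)) s := by
  have h := (((hasDerivAt_id s).const_mul c).arctan).div_const c
  simpa only [id, mul_one, mul_div_cancel_right₀ _ hc] using h

theorem norm_arctan_mul_div_le {c : ℝ} (hc : 1 ≤ c) (s : ℝ) : ‖arctan (c * s) / c‖ ≤ π / 2 := by
  rw [norm_div, Real.norm_of_nonneg (zero_le_one.trans hc)]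
  exact (div_le_self (norm_nonneg _) hc).trans
    (abs_le.2 ⟨(neg_pi_div_two_lt_arctan _).le, (arctan_lt_pi_div_two _).le⟩)

theorem norm_one_div_one_add_mul_sq_le (c s : ℝ) : ‖1 / (1 + (c * s) ^ 2)‖ ≤ 1 := by
  rw [Real.norm_of_nonneg (by positivity)]
  exact div_le_one_of_le₀ (by nlinarith [sq_nonneg (c * s)]) (by positivity)

theorem tendsto_arctan_mul_div_atTop (s : ℝ) :
    Tendsto (fun c : ℝ => arctan (c * s) / c) atTop (𝓝 0) :=
  tendsto_bdd_div_atTop_nhds_zero (b := -(π / 2)) (B := π / 2)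
    (.of_forall fun _ => (neg_pi_div_two_lt_arctan _).le)
    (.of_forall fun _ => (arctan_lt_pi_div_two _).le) tendsto_id

theorem tendsto_one_div_one_add_mul_sq_atTop (s : ℝ) :
    Tendsto (fun c : ℝ => 1 / (1 + (c * s) ^ 2)) atTop (𝓝 (if s = 0 then 1 else 0)) := by
  split_ifs with hs
  · simp [hs]
  · have hsq : Tendsto (fun c : ℝ => c ^ 2 * s ^ 2) atTop atTop :=
      (tendsto_pow_atTop two_ne_zero).atTop_mul_const (by positivity)
    simp_rw [mul_pow]
    exact (tendsto_atTop_add_const_left _ 1 hsq).const_div_atTop 1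

end ArctanRescaling

section WeakDerivative

variable {E F ι : Type*} [NormedAddCommGroup E] [NormedSpace ℝ E] [MeasurableSpace E]
  {μ : Measure E} {v : E} [NormedAddCommGroup F] [NormedSpace ℝ F]

/-- `g` is the weak (distributional) derivative of `f` in the direction `v`. Local integrability of
both functions is part of the notion. -/
structure HasWeakLineDeriv (μ : Measure E) (v : E) (f g : E → F) : Prop where
  locallyIntegrable : LocallyIntegrable f μ
  locallyIntegrable_deriv : LocallyIntegrable g μ
  integral_fderiv_smul : ∀ χ : E → ℝ, ContDiff ℝ ∞ χ → HasCompactSupport χ →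
    ∫ x, fderiv ℝ χ x v • f x ∂μ = -∫ x, χ x • g x ∂μ

namespace HasWeakLineDeriv

variable [BorelSpace E]

theorem of_tendsto {l : Filter ι} [l.NeBot] {u w : ι → E → F} {f g : E → F}
    (h : ∀ i, HasWeakLineDeriv μ v (u i) (w i)) (hu : TendstoLOneLoc μ u l f)
    (hw : TendstoLOneLoc μ w l g) (hf : LocallyIntegrable f μ) (hg : LocallyIntegrable g μ) :
    HasWeakLineDeriv μ v f g := by
  refine ⟨hf, hg, fun χ hχ hχs => ?_⟩
  have hχ' : Continuous fun x => fderiv ℝ χ x v :=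
    (hχ.continuous_fderiv (by simp)).clm_apply continuous_const
  refine tendsto_nhds_unique (hu.tendsto_integral_smul (fun i => (h i).locallyIntegrable) hf hχ'
    (hχs.fderiv_apply (𝕜 := ℝ) v)) ?_
  simp_rw [fun i => (h i).integral_fderiv_smul χ hχ hχs]
  exact (hw.tendsto_integral_smul (fun i => (h i).locallyIntegrable_deriv) hg hχ.continuous
    hχs).neg

variable [FiniteDimensional ℝ E] [μ.IsAddHaarMeasure]

theorem of_contDiff {f : E → F} (hf : ContDiff ℝ 1 f) :
    HasWeakLineDeriv μ v f (fun x => fderiv ℝ f x v) := by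
  have hf' : Continuous fun x => fderiv ℝ f x v :=
    (hf.continuous_fderiv one_ne_zero).clm_apply continuous_const
  refine ⟨hf.continuous.locallyIntegrable, hf'.locallyIntegrable, fun χ hχ hχs => ?_⟩
  have hχ' : Continuous fun x => fderiv ℝ χ x v :=
    (hχ.continuous_fderiv (by simp)).clm_apply continuous_const
  rw [integral_smul_fderiv_eq_neg_fderiv_smul_of_integrable, neg_neg]
  · exact (hχ'.smul hf.continuous).integrable_of_hasCompactSupport
      (hχs.fderiv_apply (𝕜 := ℝ) v).smul_right
  · exact (hχ.continuous.smul hf').integrable_of_hasCompactSupport hχs.smul_right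
  · exact (hχ.continuous.smul hf.continuous).integrable_of_hasCompactSupport hχs.smul_right
  · exact fun x _ => hχ.differentiable (by simp) x
  · exact fun x _ => hf.differentiable one_ne_zero x

-- The derivative falls on the kernel, and `t ↦ φ (x - t)` is itself a test function.
theorem fderiv_mollify {f g : E → F} (h : HasWeakLineDeriv μ v f g)
    (φ : ContDiffBump (0 : E)) (x : E) :
    fderiv ℝ (mollify φ μ f) x v = mollify φ μ g x := by
  have hη : ContDiff ℝ ∞ (φ.normed μ) := φ.contDiff_normed
  have hη1 : ContDiff ℝ 1 (φ.normed μ) := φ.contDiff_normed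
  have hkernel : ∀ t, fderiv ℝ (fun t => φ.normed μ (x - t)) t v
      = -fderiv ℝ (φ.normed μ) (x - t) v := fun t => by
    have hcomp : HasFDerivAt (fun t => φ.normed μ (x - t)) _ t :=
      (hη1.differentiable one_ne_zero (x - t)).hasFDerivAt.comp t ((hasFDerivAt_id t).const_sub x)
    rw [hcomp.fderiv]
    simp
  have hexists : ConvolutionExistsAt (fderiv ℝ (φ.normed μ)) f x
      (ContinuousLinearMap.precompL E (ContinuousLinearMap.lsmul ℝ ℝ)) μ :=
    (φ.hasCompactSupport_normed.fderiv ℝ).convolutionExists_left _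
      (hη1.continuous_fderiv one_ne_zero) h.locallyIntegrable x
  have htest := h.integral_fderiv_smul (fun t => φ.normed μ (x - t)) (hη.comp (by fun_prop))
    (φ.hasCompactSupport_normed.comp_homeomorph (Homeomorph.subLeft x))
  simp_rw [hkernel, neg_smul, integral_neg, neg_inj] at htest
  rw [mollify_eq_integral, ← htest, mollify,
    (φ.hasCompactSupport_normed.hasFDerivAt_convolution_left (ContinuousLinearMap.lsmul ℝ ℝ) hη1
      h.locallyIntegrable x).fderiv, convolution_eq_swap,
    ContinuousLinearMap.integral_apply hexists.integrable_swap]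
  rfl

theorem comp_contDiff_of_contDiff {f : E → ℝ} (hf : ContDiff ℝ 1 f) {ψ : ℝ → ℝ}
    (hψ : ContDiff ℝ 1 ψ) :
    HasWeakLineDeriv μ v (fun x => ψ (f x)) (fun x => deriv ψ (f x) • fderiv ℝ f x v) := by
  have hchain : ∀ x, fderiv ℝ (fun x => ψ (f x)) x v = deriv ψ (f x) • fderiv ℝ f x v := fun x => by
    rw [fderiv_fun_comp x (hψ.differentiable one_ne_zero _) (hf.differentiable one_ne_zero x)]
    simp [mul_comm]
  simp_rw [← hchain]
  exact of_contDiff (hψ.comp hf)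

theorem comp_contDiff {f g : E → ℝ} (h : HasWeakLineDeriv μ v f g) {ψ : ℝ → ℝ}
    (hψ : ContDiff ℝ 1 ψ) {C : ℝ≥0} (hC : ∀ s, ‖deriv ψ s‖₊ ≤ C) :
    HasWeakLineDeriv μ v (fun x => ψ (f x)) (fun x => deriv ψ (f x) • g x) := by
  obtain ⟨φ, hφ, hφK⟩ := exists_seq_contDiffBump_tendsto_rOut E
  replace hφK := Eventually.of_forall (f := atTop) hφK
  have hψ' : Continuous (deriv ψ) := hψ.continuous_deriv_one
  have hlip : LipschitzWith C ψ :=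
    lipschitzWith_of_nnnorm_deriv_le (hψ.differentiable one_ne_zero) hC
  obtain ⟨hf, hg, -⟩ := id h
  have hfn : ∀ n, ContDiff ℝ 1 (mollify (φ n) μ f) := fun n =>
    (contDiff_mollify (φ n) hf).of_le (by simp)
  have hgn : ∀ n, Continuous (mollify (φ n) μ g) := fun n =>
    (contDiff_mollify (φ n) hg).continuous
  have hderiv_meas := hψ'.comp_aestronglyMeasurable hf.aestronglyMeasurable
  have hsmooth : ∀ n, HasWeakLineDeriv μ v (fun x => ψ (mollify (φ n) μ f x))
      (fun x => deriv ψ (mollify (φ n) μ f x) • mollify (φ n) μ g x) := fun n => by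
    simpa only [h.fderiv_mollify] using comp_contDiff_of_contDiff (μ := μ) (v := v) (hfn n) hψ
  refine of_tendsto hsmooth
    ((tendstoLOneLoc_mollify hφ hφK hf).comp_lipschitzWith
      (fun n => (hfn n).continuous.locallyIntegrable) hf hlip)
    ((tendstoLOneLoc_mollify hφ hφK hg).bdd_smul (fun n => (hgn n).locallyIntegrable) hg
      (fun n => (hψ'.comp (hfn n).continuous).aestronglyMeasurable) hderiv_meas
      (fun n x => hC _) (fun x => hC _) ?_ (ae_tendsto_mollify hφ hφK hg))
    (locallyIntegrable_comp_of_lipschitzWith hf hlip)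
    (locallyIntegrable_bdd_smul hg hderiv_meas fun x => hC _)
  filter_upwards [ae_tendsto_mollify hφ hφK hf] with x hfx using (hψ'.tendsto _).comp hfx

theorem arctan_mul_div {f g : E → ℝ} (h : HasWeakLineDeriv μ v f g) {c : ℝ} (hc : c ≠ 0) :
    HasWeakLineDeriv μ v (fun x => arctan (c * f x) / c)
      (fun x => (1 / (1 + (c * f x) ^ 2)) • g x) := by
  have hderiv : deriv (fun s => arctan (c * s) / c) = fun s => 1 / (1 + (c * s) ^ 2) :=
    funext fun s => (hasDerivAt_arctan_mul_div hc s).deriv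
  have hsmooth : ContDiff ℝ 1 fun s => arctan (c * s) / c :=
    (contDiff_const.mul contDiff_id).arctan.div_const c
  simpa only [hderiv] using h.comp_contDiff hsmooth (C := 1) fun s => by
    rw [hderiv]
    exact norm_one_div_one_add_mul_sq_le c s

-- As `c → ∞`, the functions `arctan (c * f) / c` tend to `0`, whereas their weak derivatives
-- `g / (1 + (c * f) ^ 2)` tend to `g` on `{f = 0}` and to `0` elsewhere.
theorem zero_ite_eq_zero {f g : E → ℝ} (h : HasWeakLineDeriv μ v f g) :
    HasWeakLineDeriv μ v (fun _ => 0) (fun x => (if f x = 0 then (1 : ℝ) else 0) • g x) := by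
  obtain ⟨hf, hg, -⟩ := id h
  let c : ℕ → ℝ := fun k => k + 1
  have hc : Tendsto c atTop atTop :=
    tendsto_atTop_add_const_right _ 1 tendsto_natCast_atTop_atTop
  have hc1 : ∀ k, 1 ≤ c k := fun k => by simp [c]
  have harctan : ∀ k, HasWeakLineDeriv μ v (fun x => arctan (c k * f x) / c k)
      (fun x => (1 / (1 + (c k * f x) ^ 2)) • g x) := fun k =>
    h.arctan_mul_div (one_pos.trans_le (hc1 k)).ne'
  have hslope_meas : ∀ k, AEStronglyMeasurable (fun x => 1 / (1 + (c k * f x) ^ 2)) μ := fun k =>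
    (hf.aestronglyMeasurable.aemeasurable.const_mul (c k)).pow_const 2 |>.const_add 1
      |>.const_div 1 |>.aestronglyMeasurable
  have hslope_lim : ∀ᵐ x ∂μ, Tendsto (fun k => 1 / (1 + (c k * f x) ^ 2)) atTop
      (𝓝 (if f x = 0 then 1 else 0)) :=
    .of_forall fun x => (tendsto_one_div_one_add_mul_sq_atTop (f x)).comp hc
  have hzero_meas := aestronglyMeasurable_of_tendsto_ae atTop hslope_meas hslope_lim
  have hzero_le : ∀ x, ‖if f x = 0 then (1 : ℝ) else 0‖ ≤ 1 := fun x => by split_ifs <;> simp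
  refine of_tendsto (l := atTop) harctan ?_ ?_ (locallyIntegrable_const 0)
    (locallyIntegrable_bdd_smul hg hzero_meas hzero_le)
  · exact (TendstoLOneLoc.const (fun _ => π / 2) atTop).of_dominated
      (fun k => (harctan k).locallyIntegrable.aestronglyMeasurable) (locallyIntegrable_const 0)
      (fun _ => locallyIntegrable_const _) (locallyIntegrable_const _)
      (fun k => .of_forall fun x => norm_arctan_mul_div_le (hc1 k) (f x))
      (.of_forall fun x => (tendsto_arctan_mul_div_atTop (f x)).comp hc)
  · exact (TendstoLOneLoc.const g atTop).bdd_smul (fun _ => hg) hg hslope_meas hzero_meas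
      (fun k x => norm_one_div_one_add_mul_sq_le (c k) (f x)) hzero_le hslope_lim
      (.of_forall fun x => tendsto_const_nhds)

theorem ae_eq_zero_of_eq_zero {f g : E → ℝ} (h : HasWeakLineDeriv μ v f g) :
    ∀ᵐ x ∂μ, f x = 0 → g x = 0 := by
  have hzero := h.zero_ite_eq_zero
  have hvanish := ae_eq_zero_of_integral_contDiff_smul_eq_zero hzero.locallyIntegrable_deriv
    fun χ hχ hχs => by simpa using (hzero.integral_fderiv_smul χ hχ hχs).symm
  filter_upwards [hvanish] with x hx hfx
  simpa [hfx] using hx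

end HasWeakLineDeriv

end WeakDerivative

section EnergyConvergence

theorem tendsto_relEnergy {ι : Type*} {l : Filter ι} {p a₀ r₀ : ℝ} {a r : ι → ℝ} (hp : 0 ≤ p)
    (ha : Tendsto a l (𝓝 a₀)) (hr : Tendsto r l (𝓝 r₀)) (hr₀ : r₀ ≠ 0) :
    Tendsto (fun i => relEnergy p (a i) (r i)) l (𝓝 (relEnergy p a₀ r₀)) :=
  ((ha.div hr hr₀).rpow_const (.inr hp)).mul hr

variable {E F ι : Type*} [NormedAddCommGroup E] [NormedSpace ℝ E] [FiniteDimensional ℝ E]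
  [MeasurableSpace E] [BorelSpace E] {μ : Measure E} [μ.IsAddHaarMeasure] [NormedAddCommGroup F]
  [NormedSpace ℝ F] {p : ℝ} {f : E → ℝ} {G : E → F}

theorem relEnergy_mollify_le (φ : ContDiffBump (0 : E)) (hp : 1 ≤ p) (hf0 : 0 ≤ᵐ[μ] f)
    (hf : LocallyIntegrable f μ) (hG : LocallyIntegrable G μ) (h0 : ∀ᵐ x ∂μ, f x = 0 → G x = 0)
    (hE : LocallyIntegrable (fun x => relEnergy p ‖G x‖ (f x)) μ) (x : E) :
    relEnergy p ‖mollify φ μ G x‖ (mollify φ μ f x)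
      ≤ mollify φ μ (fun y => relEnergy p ‖G y‖ (f y)) x := by
  have hweight : ∀ t, relEnergy p ‖φ.normed μ (x - t) • G t‖ (φ.normed μ (x - t) • f t)
      = φ.normed μ (x - t) • relEnergy p ‖G t‖ (f t) := fun t => by
    rw [norm_smul, Real.norm_of_nonneg (φ.nonneg_normed _), smul_eq_mul, relEnergy_mul,
      smul_eq_mul]
  simp_rw [mollify_eq_integral, ← hweight]
  refine relEnergy_norm_integral_le hp ?_ (integrable_normed_sub_smul φ hf x)
    (integrable_normed_sub_smul φ hG x) ?_ ?_
  · filter_upwards [hf0] with t ht using mul_nonneg (φ.nonneg_normed _) ht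
  · filter_upwards [h0] with t ht hzero
    rcases smul_eq_zero.1 hzero with hφt | hft
    · rw [hφt, zero_smul]
    · rw [ht hft, smul_zero]
  · simp_rw [hweight]
    exact integrable_normed_sub_smul φ hE x

variable [CompleteSpace F] {φ : ι → ContDiffBump (0 : E)} {l : Filter ι} {K : ℝ}

theorem ae_tendsto_relEnergy_mollify (hφ : Tendsto (fun i => (φ i).rOut) l (𝓝 0))
    (hφK : ∀ᶠ i in l, (φ i).rOut ≤ K * (φ i).rIn) (hp : 1 ≤ p) (hf0 : 0 ≤ᵐ[μ] f)
    (hf : LocallyIntegrable f μ) (hG : LocallyIntegrable G μ) (h0 : ∀ᵐ x ∂μ, f x = 0 → G x = 0)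
    (hE : LocallyIntegrable (fun x => relEnergy p ‖G x‖ (f x)) μ) :
    ∀ᵐ x ∂μ, Tendsto (fun i => relEnergy p ‖mollify (φ i) μ G x‖ (mollify (φ i) μ f x)) l
      (𝓝 (relEnergy p ‖G x‖ (f x))) := by
  filter_upwards [ae_tendsto_mollify hφ hφK hf, ae_tendsto_mollify hφ hφK hG,
    ae_tendsto_mollify hφ hφK hE] with x hfx hGx hEx
  rcases eq_or_ne (f x) 0 with hzero | hne
  · rw [hzero, relEnergy_zero_right] at hEx ⊢
    exact squeeze_zero
      (fun i => relEnergy_nonneg (norm_nonneg _) (mollify_nonneg (φ i) hf0 x))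
      (fun i => relEnergy_mollify_le (φ i) hp hf0 hf hG h0 hE x) hEx
  · exact tendsto_relEnergy (zero_le_one.trans hp) hGx.norm hfx hne

theorem tendsto_integral_relEnergy_mollify [l.IsCountablyGenerated]
    (hφ : Tendsto (fun i => (φ i).rOut) l (𝓝 0)) (hφK : ∀ᶠ i in l, (φ i).rOut ≤ K * (φ i).rIn)
    (hp : 1 ≤ p) (hf0 : 0 ≤ᵐ[μ] f) (hf : LocallyIntegrable f μ) (hG : LocallyIntegrable G μ)
    (h0 : ∀ᵐ x ∂μ, f x = 0 → G x = 0) (hE : Integrable (fun x => relEnergy p ‖G x‖ (f x)) μ) :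
    Tendsto (fun i => ∫ x, relEnergy p ‖mollify (φ i) μ G x‖ (mollify (φ i) μ f x) ∂μ) l
      (𝓝 (∫ x, relEnergy p ‖G x‖ (f x) ∂μ)) := by
  have hbound : ∀ i x, ‖relEnergy p ‖mollify (φ i) μ G x‖ (mollify (φ i) μ f x)‖
      ≤ mollify (φ i) μ (fun y => relEnergy p ‖G y‖ (f y)) x := fun i x => by
    rw [Real.norm_of_nonneg (relEnergy_nonneg (norm_nonneg _) (mollify_nonneg _ hf0 x))]
    exact relEnergy_mollify_le (φ i) hp hf0 hf hG h0 hE.locallyIntegrable x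
  have hmeas : ∀ i, AEStronglyMeasurable
      (fun x => relEnergy p ‖mollify (φ i) μ G x‖ (mollify (φ i) μ f x)) μ := fun i => by
    have hfi := (contDiff_mollify (φ i) hf).continuous.measurable
    have hGi := (contDiff_mollify (φ i) hG).continuous.norm.measurable
    exact (((hGi.div hfi).pow_const p).mul hfi).aestronglyMeasurable
  have hL1 := tendsto_integral_norm_sub_of_dominated hmeas hE
    (fun i => integrable_mollify (φ i) hE) hE (tendsto_integral_norm_mollify_sub hφ hφK hE)
    (fun i => .of_forall (hbound i))
    (ae_tendsto_relEnergy_mollify hφ hφK hp hf0 hf hG h0 hE.locallyIntegrable)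
  refine tendsto_iff_norm_sub_tendsto_zero.2
    (squeeze_zero (fun i => norm_nonneg _) (fun i => ?_) hL1)
  rw [← integral_sub ((integrable_mollify (φ i) hE).mono' (hmeas i) (.of_forall (hbound i))) hE]
  exact norm_integral_le_integral_norm _

end EnergyConvergence

section Coordinates

variable {d : ℕ}

theorem l2norm_eq_norm_toLp (v : Fin d → ℝ) : l2norm v = ‖WithLp.toLp 2 v‖ := by
  simp [l2norm, EuclideanSpace.norm_eq]

theorem ite_eq_relEnergy (p r : ℝ) (v : Fin d → ℝ) :
    (if r = 0 then 0 else (l2norm v / r) ^ p * r) = relEnergy p ‖WithLp.toLp 2 v‖ r := by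
  rw [← l2norm_eq_norm_toLp]
  split_ifs with hr
  · rw [hr, relEnergy_zero_right]
  · rfl

theorem hasWeakLineDeriv_single {f h : (Fin d → ℝ) → ℝ} {i : Fin d}
    (hf : LocallyIntegrable f volume) (hh : LocallyIntegrable h volume)
    (hweak : ∀ χ, IsTest χ → ∫ x, f x * pd i χ x = -∫ x, h x * χ x) :
    HasWeakLineDeriv volume (Pi.single i 1) f h where
  locallyIntegrable := hf
  locallyIntegrable_deriv := hh
  integral_fderiv_smul χ hχ hχs := by
    simpa only [pd, smul_eq_mul, mul_comm] using hweak χ ⟨hχ, hχs⟩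

theorem integrable_apply_of_integrable_toLp {α : Type*} [MeasurableSpace α] {μ : Measure α}
    {g : α → Fin d → ℝ} (hg : Integrable (fun x => WithLp.toLp 2 (g x)) μ) (i : Fin d) :
    Integrable (fun x => g x i) μ :=
  (EuclideanSpace.proj (𝕜 := ℝ) i).integrable_comp hg

theorem aestronglyMeasurable_toLp {α : Type*} [MeasurableSpace α] {μ : Measure α}
    {g : α → Fin d → ℝ} (hg : ∀ i, AEStronglyMeasurable (fun x => g x i) μ) :
    AEStronglyMeasurable (fun x => WithLp.toLp 2 (g x)) μ :=
  (PiLp.continuous_toLp 2 _).comp_aestronglyMeasurable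
    (aemeasurable_pi_lambda _ fun i => (hg i).aemeasurable).aestronglyMeasurable

theorem ae_toLp_eq_zero_of_eq_zero {f : (Fin d → ℝ) → ℝ} {g : (Fin d → ℝ) → Fin d → ℝ}
    (h : ∀ i, HasWeakLineDeriv volume (Pi.single i 1) f (fun x => g x i)) :
    ∀ᵐ x, f x = 0 → WithLp.toLp 2 (g x) = 0 := by
  filter_upwards [ae_all_iff.2 fun i => (h i).ae_eq_zero_of_eq_zero] with x hx hfx
  ext i
  exact hx i hfx

theorem toLp_pd_mollify {f : (Fin d → ℝ) → ℝ} {g : (Fin d → ℝ) → Fin d → ℝ}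
    (h : ∀ i, HasWeakLineDeriv volume (Pi.single i 1) f (fun x => g x i))
    (hg : LocallyIntegrable (fun x => WithLp.toLp 2 (g x)) volume)
    (φ : ContDiffBump (0 : Fin d → ℝ)) (x : Fin d → ℝ) :
    WithLp.toLp 2 (fun i => pd i (mollify φ volume f) x)
      = mollify φ volume (fun y => WithLp.toLp 2 (g y)) x := by
  ext i
  exact ((h i).fderiv_mollify φ x).trans
    (map_mollify (EuclideanSpace.proj (𝕜 := ℝ) i) φ hg x).symm

end Coordinates

/-- Let `ν = ρ dx` be a probability measure on ℝ^d with
`ρ ∈ W^{1,1}_loc` (with weak gradient `g`) and `p ≥ 1` with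
`∫_{ρ>0} (‖∇ρ‖/ρ)^p ρ dx < ∞`.  Then there is a sequence of probability densities
`ρ_n` which are smooth and nonnegative, converge to `ρ` in total variation
(equivalently in `L¹`), whose relative Fisher-type integrals converge to that of `ρ`,
and whose partial derivatives are bounded and integrable. -/
theorem stmt2 (d : ℕ) (ρ : (Fin d → ℝ) → ℝ) (g : (Fin d → ℝ) → Fin d → ℝ)
    (hρ0 : ∀ x, 0 ≤ ρ x) (hρ1 : ∫ x, ρ x = 1)
    (hρloc : LocallyIntegrable ρ volume)
    (hgloc : ∀ i, LocallyIntegrable (fun x => g x i) volume)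
    (hweak : ∀ (i : Fin d) (φ : (Fin d → ℝ) → ℝ), IsTest φ →
      ∫ x, ρ x * pd i φ x = - ∫ x, g x i * φ x)
    (p : ℝ) (hp : 1 ≤ p)
    (hfin : IntegrableOn (fun x => (l2norm (g x) / ρ x) ^ p * ρ x)
      {x | 0 < ρ x} volume) :
    ∃ ρn : ℕ → (Fin d → ℝ) → ℝ,
      -- each ρ_n is a smooth nonnegative probability density
      (∀ n, ContDiff ℝ (⊤ : ℕ∞) (ρn n) ∧ (∀ x, 0 ≤ ρn n x) ∧ ∫ x, ρn n x = 1) ∧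
      -- convergence in total variation (L¹ convergence of the densities)
      Filter.Tendsto (fun n => ∫ x, |ρn n x - ρ x|) Filter.atTop (nhds 0) ∧
      -- convergence of the Fisher-type integrals (convention: integrand ≔ 0 on {ρ_n = 0})
      Filter.Tendsto
        (fun n => ∫ x, if ρn n x = 0 then 0 else
          (l2norm (fun i => pd i (ρn n) x) / ρn n x) ^ p * ρn n x)
        Filter.atTop
        (nhds (∫ x in {x | 0 < ρ x}, (l2norm (g x) / ρ x) ^ p * ρ x)) ∧
      -- partial derivatives are uniformly bounded and integrable
      (∀ (i : Fin d) (n : ℕ), (∃ M : ℝ, ∀ x, |pd i (ρn n) x| ≤ M) ∧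
        Integrable (fun x => pd i (ρn n) x) volume) := by
  have hρ0' : 0 ≤ᵐ[volume] ρ := .of_forall hρ0
  have hρ : Integrable ρ := .of_integral_ne_zero (by simp [hρ1])
  have hdρ i := hasWeakLineDeriv_single hρloc (hgloc i) (hweak i)
  have hg0 := ae_toLp_eq_zero_of_eq_zero hdρ
  simp only [l2norm_eq_norm_toLp] at hfin
  have hE := (integrableOn_pos_relEnergy_iff hρ0).1 hfin
  have hg : Integrable fun x => WithLp.toLp 2 (g x) :=
    integrable_of_integrable_relEnergy hp hρ0' hρ
      (aestronglyMeasurable_toLp fun i => (hgloc i).aestronglyMeasurable) hg0 hE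
  have hgi := integrable_apply_of_integrable_toLp hg
  obtain ⟨φ, hφ, hφK⟩ := exists_seq_contDiffBump_tendsto_rOut (Fin d → ℝ)
  replace hφK := Eventually.of_forall (f := atTop) hφK
  have henergy :=
    tendsto_integral_relEnergy_mollify hφ hφK hp hρ0' hρloc hg.locallyIntegrable hg0 hE
  rw [← setIntegral_pos_relEnergy hρ0] at henergy
  refine ⟨fun n => mollify (φ n) volume ρ, fun n => ⟨contDiff_mollify _ hρloc,
    mollify_nonneg _ hρ0', (integral_mollify _ hρ).trans hρ1⟩,
    tendsto_integral_norm_mollify_sub hφ hφK hρ, ?_, fun i n => ?_⟩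
  · simp only [ite_eq_relEnergy, toLp_pd_mollify hdρ hg.locallyIntegrable]
    simp only [l2norm_eq_norm_toLp]
    exact henergy
  · simp only [pd, (hdρ i).fderiv_mollify]
    exact ⟨⟨_, norm_mollify_le_integral_norm (φ n) (hgi i)⟩, integrable_mollify (φ n) (hgi i)⟩

end
end

section
/- Let ρ be a compactly supported C¹ probability density on ℝ^d, not identically zero, let p > 1, and assume ∫_{{ρ>0}} ‖∇ρ(x)‖^p ρ(x)^{1−p} dx < ∞ (with the convention ∇ρ/ρ := 0 on {ρ = 0}). For t > 0 let ρ_t = ρ ∗ g_t, where g_t(x) = (2πt)^{−d/2} exp(−‖x‖²/(2t)) is the Gaussian heat kernel. Then ρ_t is everywhere positive, satisfies the pointwise bound (‖∇ρ_t(x)‖/ρ_t(x))^p ρ_t(x) ≤ (g_t ∗ (‖∇ρ‖^p ρ^{1−p}))(x) for all x, and consequently ∫ ‖∇ρ_t‖^p ρ_t^{1−p} dx ≤ ∫_{{ρ>0}} ‖∇ρ‖^p ρ^{1−p} dx. -/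
open MeasureTheory Real Set

noncomputable section

/-- The Gaussian heat kernel `g_t(x) = (2πt)^{-d/2} exp(-‖x‖²/(2t))` on ℝ^d. -/
def heatKernel (d : ℕ) (t : ℝ) (x : Fin d → ℝ) : ℝ :=
  (2 * Real.pi * t) ^ (-(d : ℝ) / 2) * Real.exp (-(∑ i, x i ^ 2) / (2 * t))

/-!
The perspective `J (a, r) = a ^ p * r ^ (1 - p)` of `a ↦ a ^ p` is convex and homogeneous of degree
one, so Jensen's inequality holds for it without normalisation of the measure or of the weight:
`J (‖g ∗ v‖, g ∗ r) ≤ g ∗ J (‖v‖, r)`. Taking `g = g_t`, `r = ρ` and `v = ∇ρ` gives the pointwise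
bound, because `∇(g_t ∗ ρ) = g_t ∗ ∇ρ`; this identity is obtained by differentiating the kernel and
integrating by parts. The integrated bound follows since `g_t` has mass one.
-/

open scoped NNReal

section Jensen

lemma mul_rpow_mul_mul_rpow_one_sub {c a r p : ℝ} (hc : 0 ≤ c) (ha : 0 ≤ a) (hr : 0 ≤ r)
    (hp : p ≠ 0) : (c * a) ^ p * (c * r) ^ (1 - p) = c * (a ^ p * r ^ (1 - p)) := by
  rcases hc.eq_or_lt with rfl | hc
  · simp [zero_rpow hp]
  · have hcp : c ^ p * c ^ (1 - p) = c := by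
      rw [← rpow_add hc, add_sub_cancel, rpow_one]
    rw [mul_rpow hc.le ha, mul_rpow hc.le hr, mul_mul_mul_comm, hcp]

lemma div_rpow_mul_self {a r : ℝ} (ha : 0 ≤ a) (hr : 0 < r) (p : ℝ) :
    (a / r) ^ p * r = a ^ p * r ^ (1 - p) := by
  rw [div_rpow ha hr.le, rpow_sub hr, rpow_one, div_mul_eq_mul_div, mul_div_assoc]

-- Bernoulli's inequality at `a / (m * r)`, i.e. the tangent line of `s ↦ s ^ p` at `m` evaluated at
-- `a / r`, multiplied by `r`.
lemma mul_rpow_sub_one_mul_le {a r m p : ℝ} (ha : 0 ≤ a) (hr : 0 ≤ r) (har : r = 0 → a = 0)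
    (hm : 0 < m) (hp : 1 ≤ p) :
    p * m ^ (p - 1) * a ≤ (p - 1) * m ^ p * r + a ^ p * r ^ (1 - p) := by
  rcases hr.eq_or_lt with rfl | hr
  · simp [har rfl, zero_rpow (by linarith : p ≠ 0)]
  · have bernoulli : 1 + p * (a / (m * r) - 1) ≤ (a / (m * r)) ^ p := by
      have hs : 0 ≤ a / (m * r) := by positivity
      simpa using one_add_mul_self_le_rpow_one_add (s := a / (m * r) - 1) (by linarith) hp
    have hmp : m ^ (p - 1) = m ^ p / m := rpow_sub_one hm.ne' p
    calc p * m ^ (p - 1) * a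
        = (p - 1) * m ^ p * r + (1 + p * (a / (m * r) - 1)) * (m ^ p * r) := by
          rw [hmp]; field_simp; ring
      _ ≤ (p - 1) * m ^ p * r + (a / (m * r)) ^ p * (m ^ p * r) := by gcongr
      _ = (p - 1) * m ^ p * r + a ^ p * r ^ (1 - p) := by
          rw [← div_rpow_mul_self ha hr, mul_comm m r, ← div_div, div_rpow (by positivity) hm.le]
          field_simp

variable {α F : Type*} [MeasurableSpace α] {μ : Measure α} [NormedAddCommGroup F]
  {r w : α → ℝ} {v : α → F} {p : ℝ}

lemma integrable_of_integrable_norm_rpow_mul_rpow (hp : 1 ≤ p) (hr₀ : ∀ y, 0 ≤ r y)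
    (hrv : ∀ y, r y = 0 → v y = 0) (hv : AEStronglyMeasurable v μ) (hr : Integrable r μ)
    (hvr : Integrable (fun y ↦ ‖v y‖ ^ p * r y ^ (1 - p)) μ) : Integrable v μ := by
  refine ((hr.const_mul (p - 1)).add hvr).mono' hv (.of_forall fun y ↦ ?_)
  calc ‖v y‖ ≤ p * ‖v y‖ := le_mul_of_one_le_left (norm_nonneg _) hp
    _ ≤ (p - 1) * r y + ‖v y‖ ^ p * r y ^ (1 - p) := by
      simpa using mul_rpow_sub_one_mul_le (norm_nonneg (v y)) (hr₀ y)
        (fun h ↦ by simp [hrv y h]) one_pos hp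

variable [NormedSpace ℝ F]

-- Integrate the tangent inequality above at the slope `m = ‖∫ v‖ / ∫ r`.
theorem norm_integral_rpow_mul_integral_rpow_le (hp : 1 ≤ p) (hr₀ : ∀ y, 0 ≤ r y)
    (hrv : ∀ y, r y = 0 → v y = 0) (hr : Integrable r μ) (hv : Integrable v μ)
    (hvr : Integrable (fun y ↦ ‖v y‖ ^ p * r y ^ (1 - p)) μ) :
    ‖∫ y, v y ∂μ‖ ^ p * (∫ y, r y ∂μ) ^ (1 - p) ≤ ∫ y, ‖v y‖ ^ p * r y ^ (1 - p) ∂μ := by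
  set A := ‖∫ y, v y ∂μ‖
  set R := ∫ y, r y ∂μ
  set J := ∫ y, ‖v y‖ ^ p * r y ^ (1 - p) ∂μ
  have hp₀ : p ≠ 0 := by linarith
  have hA₀ : 0 ≤ A := norm_nonneg _
  rcases hA₀.eq_or_lt with hA | hA
  · have hJ : 0 ≤ J := integral_nonneg fun y ↦
      mul_nonneg (rpow_nonneg (norm_nonneg _) _) (rpow_nonneg (hr₀ y) _)
    simpa [← hA, zero_rpow hp₀] using hJ
  · have hR : 0 < R := by
      refine (integral_nonneg hr₀).lt_of_ne' fun hR ↦ hA.ne' ?_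
      have hr_zero : r =ᵐ[μ] 0 := (integral_eq_zero_iff_of_nonneg hr₀ hr).1 hR
      exact norm_eq_zero.2 (integral_eq_zero_of_ae (hr_zero.mono hrv))
    obtain ⟨m, hm, hmR⟩ : ∃ m, 0 < m ∧ m * R = A :=
      ⟨A / R, div_pos hA hR, div_mul_cancel₀ _ hR.ne'⟩
    have tangent : p * m ^ (p - 1) * ∫ y, ‖v y‖ ∂μ ≤ (p - 1) * m ^ p * R + J := by
      rw [← integral_const_mul, ← integral_const_mul, ← integral_add (hr.const_mul _) hvr]
      exact integral_mono (hv.norm.const_mul _) ((hr.const_mul _).add hvr) fun y ↦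
        mul_rpow_sub_one_mul_le (norm_nonneg (v y)) (hr₀ y) (fun h ↦ by simp [hrv y h]) hm hp
    have triangle : p * m ^ (p - 1) * A ≤ p * m ^ (p - 1) * ∫ y, ‖v y‖ ∂μ := by
      gcongr
      exact norm_integral_le_integral_norm _
    have slope : p * m ^ (p - 1) * A = p * m ^ p * R := by
      rw [← hmR, rpow_sub_one hm.ne']
      field_simp
    calc A ^ p * R ^ (1 - p) = m ^ p * R := by
          rw [← div_rpow_mul_self hA.le hR, ← hmR, mul_div_cancel_right₀ _ hR.ne']
      _ ≤ J := by linarith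

theorem norm_integral_smul_rpow_mul_integral_mul_rpow_le (hp : 1 ≤ p) (hr₀ : ∀ y, 0 ≤ r y)
    (hrv : ∀ y, r y = 0 → v y = 0) (hr : Integrable r μ) (hv : Integrable v μ)
    (hvr : Integrable (fun y ↦ ‖v y‖ ^ p * r y ^ (1 - p)) μ) {C : ℝ} (hw₀ : ∀ y, 0 ≤ w y)
    (hw : AEStronglyMeasurable w μ) (hwC : ∀ y, w y ≤ C) :
    ‖∫ y, w y • v y ∂μ‖ ^ p * (∫ y, w y * r y ∂μ) ^ (1 - p) ≤
      ∫ y, w y * (‖v y‖ ^ p * r y ^ (1 - p)) ∂μ := by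
  have hwC' : ∀ᵐ y ∂μ, ‖w y‖ ≤ C := .of_forall fun y ↦ by
    rw [norm_of_nonneg (hw₀ y)]; exact hwC y
  have absorb : ∀ y, ‖w y • v y‖ ^ p * (w y * r y) ^ (1 - p) =
      w y * (‖v y‖ ^ p * r y ^ (1 - p)) := fun y ↦ by
    rw [norm_smul, norm_of_nonneg (hw₀ y),
      mul_rpow_mul_mul_rpow_one_sub (hw₀ y) (norm_nonneg _) (hr₀ y) (by linarith)]
  simp_rw [← absorb]
  refine norm_integral_rpow_mul_integral_rpow_le hp (fun y ↦ mul_nonneg (hw₀ y) (hr₀ y))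
    (fun y hy ↦ ?_) (hr.bdd_mul hw hwC') (hv.bdd_smul C hw hwC') ?_
  · rcases mul_eq_zero.1 hy with h | h
    · rw [h, zero_smul]
    · rw [hrv y h, smul_zero]
  · simp_rw [absorb]
    exact hvr.bdd_mul hw hwC'

end Jensen

section Mollification

variable {E F : Type*} [NormedAddCommGroup E] [NormedSpace ℝ E] [FiniteDimensional ℝ E]
  [MeasurableSpace E] [BorelSpace E] {μ : Measure E} [NormedAddCommGroup F] [NormedSpace ℝ F]
  {k : E → ℝ} {f : E → F} {C : ℝ} {K : ℝ≥0}

lemma hasFDerivAt_integral_sub_smul (hk : Differentiable ℝ k) (hkC : ∀ x, ‖k x‖ ≤ C)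
    (hkK : LipschitzWith K k) (hf : Integrable f μ) (x : E) :
    Integrable (fun y ↦ (fderiv ℝ k (x - y)).smulRight (f y)) μ ∧
    HasFDerivAt (fun x ↦ ∫ y, k (x - y) • f y ∂μ)
      (∫ y, (fderiv ℝ k (x - y)).smulRight (f y) ∂μ) x := by
  have hkm (x : E) : AEStronglyMeasurable (fun y ↦ k (x - y)) μ :=
    (hk.continuous.comp (continuous_const.sub continuous_id)).aestronglyMeasurable
  have hk'm : AEStronglyMeasurable (fun y ↦ fderiv ℝ k (x - y)) μ :=
    ((measurable_fderiv ℝ k).comp (measurable_const.sub measurable_id)).aestronglyMeasurable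
  refine hasFDerivAt_integral_of_dominated_loc_of_lip (bound := fun y ↦ K * ‖f y‖)
    Filter.univ_mem (.of_forall fun x ↦ (hkm x).smul hf.1)
    (hf.bdd_smul C (hkm x) (.of_forall fun y ↦ hkC _)) ?_ (.of_forall fun y ↦ ?_)
    (hf.norm.const_mul _) (.of_forall fun y ↦ ?_)
  · exact (ContinuousLinearMap.smulRightL ℝ E F).aestronglyMeasurable_comp₂ hk'm hf.1
  · refine LipschitzWith.lipschitzOnWith (LipschitzWith.of_dist_le_mul fun a b ↦ ?_)
    rw [dist_eq_norm, ← sub_smul, norm_smul, ← dist_eq_norm, coe_nnabs,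
      abs_of_nonneg (by positivity)]
    have := hkK.dist_le_mul (a - y) (b - y)
    rw [dist_sub_right] at this
    calc dist (k (a - y)) (k (b - y)) * ‖f y‖ ≤ K * dist a b * ‖f y‖ := by gcongr
      _ = K * ‖f y‖ * dist a b := by ring
  · exact ((hk (x - y)).hasFDerivAt.comp x ((hasFDerivAt_id x).sub_const y)).smul_const (f y)

theorem fderiv_integral_sub_smul [μ.IsAddHaarMeasure]
    (hk : Differentiable ℝ k) (hkC : ∀ x, ‖k x‖ ≤ C) (hkK : LipschitzWith K k)
    (hf : Differentiable ℝ f) (hfi : Integrable f μ) (hf'i : Integrable (fderiv ℝ f) μ) (x : E) :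
    fderiv ℝ (fun x ↦ ∫ y, k (x - y) • f y ∂μ) x = ∫ y, k (x - y) • fderiv ℝ f y ∂μ := by
  obtain ⟨hk'f, hderiv⟩ := hasFDerivAt_integral_sub_smul hk hkC hkK hfi x
  have hkm : AEStronglyMeasurable (fun y ↦ k (x - y)) μ :=
    (hk.continuous.comp (continuous_const.sub continuous_id)).aestronglyMeasurable
  have hkf : Integrable (fun y ↦ k (x - y) • f y) μ :=
    hfi.bdd_smul C hkm (.of_forall fun y ↦ hkC _)
  have hkf' : Integrable (fun y ↦ k (x - y) • fderiv ℝ f y) μ :=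
    hf'i.bdd_smul C hkm (.of_forall fun y ↦ hkC _)
  have hkx (y : E) : HasFDerivAt (fun y ↦ k (x - y)) (-fderiv ℝ k (x - y)) y := by
    simpa [Function.comp_def] using
      (hk (x - y)).hasFDerivAt.comp y ((hasFDerivAt_id y).const_sub x)
  ext e
  have by_parts : ∫ y, k (x - y) • fderiv ℝ f y e ∂μ =
      -∫ y, (-fderiv ℝ k (x - y)) e • f y ∂μ :=
    integral_bilinear_hasFDerivAt_right_eq_neg_left_of_integrable
      (B := ContinuousLinearMap.lsmul ℝ ℝ) (by simpa using (hk'f.apply_continuousLinearMap e).neg)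
      (hkf'.apply_continuousLinearMap e) hkf (fun y _ ↦ hkx y) fun y _ ↦ (hf y).hasFDerivAt
  rw [hderiv.fderiv, ContinuousLinearMap.integral_apply hk'f,
    ContinuousLinearMap.integral_apply hkf']
  simp only [ContinuousLinearMap.smulRight_apply, smul_apply, by_parts,
    neg_apply, neg_smul, integral_neg, neg_neg]

end Mollification

section HeatKernel

variable {d : ℕ} {t : ℝ}

lemma heatKernel_eq_norm (d : ℕ) (t : ℝ) (x : Fin d → ℝ) :
    heatKernel d t x =
      (2 * π * t) ^ (-(d : ℝ) / 2) * exp (-(1 / (2 * t)) * ‖WithLp.toLp 2 x‖ ^ 2) := by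
  rw [heatKernel, EuclideanSpace.real_norm_sq_eq]
  congr 2
  ring

lemma heatKernel_pos (ht : 0 < t) (x : Fin d → ℝ) : 0 < heatKernel d t x := by
  unfold heatKernel; positivity

lemma heatKernel_le (ht : 0 < t) (x : Fin d → ℝ) :
    heatKernel d t x ≤ (2 * π * t) ^ (-(d : ℝ) / 2) := by
  rw [heatKernel_eq_norm]
  refine mul_le_of_le_one_right (by positivity) (exp_le_one_iff.2 ?_)
  rw [neg_mul, neg_nonpos]
  positivity

lemma norm_heatKernel_le (ht : 0 < t) (x : Fin d → ℝ) :
    ‖heatKernel d t x‖ ≤ (2 * π * t) ^ (-(d : ℝ) / 2) := by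
  rw [norm_of_nonneg (heatKernel_pos ht x).le]
  exact heatKernel_le ht x

lemma differentiable_heatKernel (d : ℕ) (t : ℝ) : Differentiable ℝ (heatKernel d t) := by
  unfold heatKernel; fun_prop

lemma integral_heatKernel (ht : 0 < t) : ∫ x, heatKernel d t x = 1 := by
  have hpos : 0 < 2 * π * t := by positivity
  have gaussian : ∫ x : Fin d → ℝ, exp (-(1 / (2 * t)) * ‖WithLp.toLp 2 x‖ ^ 2) =
      (2 * π * t) ^ ((d : ℝ) / 2) := by
    rw [(PiLp.volume_preserving_toLp (Fin d)).integral_comp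
        (MeasurableEquiv.toLp 2 (Fin d → ℝ)).measurableEmbedding
        (fun z : EuclideanSpace ℝ (Fin d) ↦ exp (-(1 / (2 * t)) * ‖z‖ ^ 2)),
      GaussianFourier.integral_rexp_neg_mul_sq_norm (by positivity), finrank_euclideanSpace_fin]
    congr 1
    field_simp
  simp_rw [heatKernel_eq_norm]
  rw [integral_const_mul, gaussian, ← rpow_add hpos, neg_div, neg_add_cancel, rpow_zero]

lemma integrable_heatKernel (ht : 0 < t) : Integrable (heatKernel d t) :=
  integrable_of_integral_eq_one (integral_heatKernel ht)

lemma exists_lipschitzWith_exp_neg_mul_sq {b : ℝ} (hb : 0 < b) :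
    ∃ K, LipschitzWith K fun s : ℝ ↦ exp (-b * s ^ 2) := by
  refine ⟨(2 * b * (√b)⁻¹).toNNReal, lipschitzWith_of_nnnorm_deriv_le (by fun_prop) fun s ↦ ?_⟩
  have hderiv : deriv (fun s : ℝ ↦ exp (-b * s ^ 2)) s = -(2 * b * mulExpNegMulSq b s) := by
    rw [(((hasDerivAt_pow 2 s).const_mul (-b)).exp).deriv, mulExpNegSq_apply]
    ring_nf
  rw [← NNReal.coe_le_coe, coe_nnnorm, hderiv, norm_neg, norm_mul, norm_of_nonneg (by positivity),
    coe_toNNReal _ (by positivity)]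
  gcongr
  exact abs_mulExpNegMulSq_le hb

lemma exists_lipschitzWith_heatKernel (d : ℕ) (ht : 0 < t) :
    ∃ K, LipschitzWith K (heatKernel d t) := by
  obtain ⟨K, hK⟩ := exists_lipschitzWith_exp_neg_mul_sq (b := 1 / (2 * t)) (by positivity)
  rw [funext (heatKernel_eq_norm d t)]
  exact ⟨_, (lipschitzWith_smul ((2 * π * t) ^ (-(d : ℝ) / 2))).comp
    (hK.comp (lipschitzWith_one_norm.comp (PiLp.lipschitzWith_toLp 2 fun _ : Fin d ↦ ℝ)))⟩

lemma continuous_heatKernel_sub (t : ℝ) (x : Fin d → ℝ) :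
    Continuous fun y ↦ heatKernel d t (x - y) :=
  (differentiable_heatKernel d t).continuous.comp (continuous_sub_left x)

end HeatKernel

section HeatFlow

variable {d : ℕ} {t : ℝ} {f : (Fin d → ℝ) → ℝ}

/-- The heat semigroup `f ↦ f ∗ g_t`. -/
def heatFlow (t : ℝ) (f : (Fin d → ℝ) → ℝ) (x : Fin d → ℝ) : ℝ :=
  ∫ y, heatKernel d t (x - y) * f y

lemma heatFlow_pos (ht : 0 < t) (hf : Continuous f) (hfi : Integrable f) (hf₀ : ∀ x, 0 ≤ f x)
    (hfne : ∃ x, f x ≠ 0) (x : Fin d → ℝ) : 0 < heatFlow t f x := by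
  obtain ⟨z, hz⟩ := hfne
  have hkc := continuous_heatKernel_sub t x
  refine integral_pos_of_integrable_nonneg_nonzero (x := z) (hkc.mul hf) ?_
    (fun y ↦ mul_nonneg (heatKernel_pos ht _).le (hf₀ y))
    (mul_ne_zero (heatKernel_pos ht _).ne' hz)
  exact hfi.bdd_mul hkc.aestronglyMeasurable (.of_forall fun y ↦ norm_heatKernel_le ht _)

lemma heatFlow_nonneg (ht : 0 < t) (hf₀ : ∀ x, 0 ≤ f x) (x : Fin d → ℝ) : 0 ≤ heatFlow t f x :=
  integral_nonneg fun y ↦ mul_nonneg (heatKernel_pos ht _).le (hf₀ y)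

lemma integrable_heatFlow (ht : 0 < t) (hf : Integrable f) : Integrable (heatFlow t f) :=
  hf.integrable_convolution (ContinuousLinearMap.mul ℝ ℝ).flip (integrable_heatKernel ht)

lemma integral_heatFlow (ht : 0 < t) (hf : Integrable f) : ∫ x, heatFlow t f x = ∫ x, f x :=
  calc ∫ x, heatFlow t f x = (∫ x, heatKernel d t x) * ∫ x, f x :=
        integral_convolution (ContinuousLinearMap.mul ℝ ℝ).flip hf (integrable_heatKernel ht)
    _ = ∫ x, f x := by rw [integral_heatKernel ht, one_mul]

end HeatFlow

section EuclideanGradient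

variable {d : ℕ} {t : ℝ} {ρ : (Fin d → ℝ) → ℝ}

/-- The linear form `L` on `ℝ^d` seen as the vector `(L e₁, …, L e_d)` with its Euclidean norm. -/
def dualEquivEuclidean (d : ℕ) : ((Fin d → ℝ) →L[ℝ] ℝ) ≃L[ℝ] EuclideanSpace ℝ (Fin d) :=
  (LinearMap.toContinuousLinearMap.symm ≪≫ₗ ((Pi.basisFun ℝ (Fin d)).constr ℝ).symm ≪≫ₗ
    (WithLp.linearEquiv 2 ℝ (Fin d → ℝ)).symm).toContinuousLinearEquiv

/-- The gradient of a function on `Fin d → ℝ`, whose own norm is the sup norm, as a vector of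
Euclidean space. -/
def euclideanGradient (f : (Fin d → ℝ) → ℝ) (x : Fin d → ℝ) : EuclideanSpace ℝ (Fin d) :=
  dualEquivEuclidean d (fderiv ℝ f x)

lemma norm_euclideanGradient (f : (Fin d → ℝ) → ℝ) (x : Fin d → ℝ) :
    ‖euclideanGradient f x‖ = l2norm fun i ↦ pd i f x := by
  simp [EuclideanSpace.norm_eq, l2norm, pd, euclideanGradient, dualEquivEuclidean]

lemma euclideanGradient_eq_zero (hρ₀ : ∀ x, 0 ≤ ρ x) {x : Fin d → ℝ} (hx : ρ x = 0) :
    euclideanGradient ρ x = 0 := by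
  have hmin : IsLocalMin ρ x := .of_forall fun z ↦ hx ▸ hρ₀ z
  rw [euclideanGradient, hmin.fderiv_eq_zero, map_zero]

lemma aestronglyMeasurable_euclideanGradient (f : (Fin d → ℝ) → ℝ) :
    AEStronglyMeasurable (euclideanGradient f) :=
  (dualEquivEuclidean d).continuous.comp_aestronglyMeasurable
    (measurable_fderiv ℝ f).aestronglyMeasurable

lemma euclideanGradient_heatFlow (ht : 0 < t) (hρ : Differentiable ℝ ρ) (hρi : Integrable ρ)
    (hρ'i : Integrable (euclideanGradient ρ)) (x : Fin d → ℝ) :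
    euclideanGradient (heatFlow t ρ) x =
      ∫ y, heatKernel d t (x - y) • euclideanGradient ρ y := by
  obtain ⟨K, hK⟩ := exists_lipschitzWith_heatKernel d ht
  have hfderiv : fderiv ℝ (heatFlow t ρ) x = ∫ y, heatKernel d t (x - y) • fderiv ℝ ρ y :=
    fderiv_integral_sub_smul (differentiable_heatKernel d t) (norm_heatKernel_le ht) hK hρ hρi
      ((dualEquivEuclidean d).integrable_comp_iff.1 hρ'i) x
  rw [euclideanGradient, hfderiv, ← ContinuousLinearEquiv.integral_comp_comm]
  simp only [map_smul, euclideanGradient]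

end EuclideanGradient

section FisherDensity

variable {d : ℕ} {p t : ℝ} {ρ : (Fin d → ℝ) → ℝ}

/-- The integrand `‖∇ρ‖ ^ p * ρ ^ (1 - p)` of the `p`-Fisher information of `ρ`. Where a nonnegative
`ρ` vanishes so does `∇ρ`, and the conventions for real powers give the value `0` when `p ≠ 0`. -/
def fisherDensity (p : ℝ) (ρ : (Fin d → ℝ) → ℝ) (x : Fin d → ℝ) : ℝ :=
  l2norm (fun i ↦ pd i ρ x) ^ p * ρ x ^ (1 - p)

lemma fisherDensity_eq_norm (p : ℝ) (ρ : (Fin d → ℝ) → ℝ) :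
    fisherDensity p ρ = fun x ↦ ‖euclideanGradient ρ x‖ ^ p * ρ x ^ (1 - p) := by
  simp only [norm_euclideanGradient]
  rfl

lemma fisherDensity_nonneg (hρ₀ : ∀ x, 0 ≤ ρ x) (x : Fin d → ℝ) : 0 ≤ fisherDensity p ρ x :=
  mul_nonneg (rpow_nonneg (sqrt_nonneg _) _) (rpow_nonneg (hρ₀ x) _)

lemma fisherDensity_eq_zero (hp : p ≠ 0) (hρ₀ : ∀ x, 0 ≤ ρ x) {x : Fin d → ℝ} (hx : ρ x = 0) :
    fisherDensity p ρ x = 0 := by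
  simp [fisherDensity_eq_norm, euclideanGradient_eq_zero hρ₀ hx, zero_rpow hp]

lemma integrable_euclideanGradient (hp : 1 ≤ p) (hρ₀ : ∀ x, 0 ≤ ρ x) (hρi : Integrable ρ)
    (hfin : Integrable (fisherDensity p ρ)) : Integrable (euclideanGradient ρ) :=
  integrable_of_integrable_norm_rpow_mul_rpow hp hρ₀ (fun _ ↦ euclideanGradient_eq_zero hρ₀)
    (aestronglyMeasurable_euclideanGradient ρ) hρi (fisherDensity_eq_norm p ρ ▸ hfin)

theorem fisherDensity_heatFlow_le (hp : 1 ≤ p) (ht : 0 < t) (hρ : Differentiable ℝ ρ)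
    (hρ₀ : ∀ x, 0 ≤ ρ x) (hρi : Integrable ρ) (hfin : Integrable (fisherDensity p ρ))
    (x : Fin d → ℝ) :
    fisherDensity p (heatFlow t ρ) x ≤ heatFlow t (fisherDensity p ρ) x := by
  have hgrad := integrable_euclideanGradient hp hρ₀ hρi hfin
  simp only [fisherDensity_eq_norm, euclideanGradient_heatFlow ht hρ hρi hgrad] at hfin ⊢
  exact norm_integral_smul_rpow_mul_integral_mul_rpow_le hp hρ₀
    (fun _ ↦ euclideanGradient_eq_zero hρ₀) hρi hgrad hfin (fun y ↦ (heatKernel_pos ht (x - y)).le)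
    (continuous_heatKernel_sub t x).aestronglyMeasurable fun y ↦ heatKernel_le ht (x - y)

theorem integral_fisherDensity_heatFlow_le (hp : 1 ≤ p) (ht : 0 < t) (hρ : Differentiable ℝ ρ)
    (hρ₀ : ∀ x, 0 ≤ ρ x) (hρi : Integrable ρ) (hfin : Integrable (fisherDensity p ρ)) :
    ∫ x, fisherDensity p (heatFlow t ρ) x ≤ ∫ x, fisherDensity p ρ x := by
  rw [← integral_heatFlow ht hfin]
  exact integral_mono_of_nonneg
    (.of_forall <| fisherDensity_nonneg <| heatFlow_nonneg ht hρ₀)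
    (integrable_heatFlow ht hfin)
    (.of_forall <| fisherDensity_heatFlow_le hp ht hρ hρ₀ hρi hfin)

end FisherDensity

theorem stmt3_general (d : ℕ) (ρ : (Fin d → ℝ) → ℝ)
    (hρ : Differentiable ℝ ρ) (hρi : Integrable ρ)
    (hρ0 : ∀ x, 0 ≤ ρ x) (hρne : ∃ x, ρ x ≠ 0)
    (p : ℝ) (hp : 1 ≤ p)
    (hfin : IntegrableOn (fun x => l2norm (fun i => pd i ρ x) ^ p * ρ x ^ (1 - p))
      {x | 0 < ρ x} volume)
    (t : ℝ) (ht : 0 < t)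
    (ρt : (Fin d → ℝ) → ℝ)
    (hρt : ∀ x, ρt x = ∫ y, heatKernel d t (x - y) * ρ y) :
    (∀ x, 0 < ρt x) ∧
    (∀ x, (l2norm (fun i => pd i ρt x) / ρt x) ^ p * ρt x ≤
      ∫ y, heatKernel d t (x - y) *
        (if ρ y = 0 then 0 else l2norm (fun i => pd i ρ y) ^ p * ρ y ^ (1 - p))) ∧
    ∫ x, l2norm (fun i => pd i ρt x) ^ p * ρt x ^ (1 - p) ≤
      ∫ x in {x | 0 < ρ x}, l2norm (fun i => pd i ρ x) ^ p * ρ x ^ (1 - p) := by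
  obtain rfl : ρt = heatFlow t ρ := funext hρt
  have hzero {y} : ρ y = 0 → fisherDensity p ρ y = 0 := fisherDensity_eq_zero (by linarith) hρ0
  have hzero_compl (y) (hy : y ∉ {x | 0 < ρ x}) : fisherDensity p ρ y = 0 :=
    hzero ((not_lt.1 hy).antisymm (hρ0 y))
  have hint : Integrable (fisherDensity p ρ) :=
    IntegrableOn.integrable_of_forall_notMem_eq_zero hfin hzero_compl
  have hpos := heatFlow_pos ht hρ.continuous hρi hρ0 hρne
  refine ⟨hpos, fun x ↦ ?_, ?_⟩
  · calc _ = fisherDensity p (heatFlow t ρ) x := div_rpow_mul_self (sqrt_nonneg _) (hpos x) p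
      _ ≤ heatFlow t (fisherDensity p ρ) x := fisherDensity_heatFlow_le hp ht hρ hρ0 hρi hint x
      _ = _ := by
        refine integral_congr_ae (.of_forall fun y ↦ congrArg _ ?_)
        split_ifs with hy
        exacts [hzero hy, rfl]
  · calc _ ≤ ∫ x, fisherDensity p ρ x := integral_fisherDensity_heatFlow_le hp ht hρ hρ0 hρi hint
      _ = _ := (setIntegral_eq_integral_of_forall_compl_eq_zero hzero_compl).symm

/-- Let `ρ` be a compactly supported `C¹` probability density on ℝ^d,
not identically zero, `p > 1`, with `∫_{ρ>0} ‖∇ρ‖^p ρ^{1-p} < ∞`.  For `t > 0` let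
`ρ_t = ρ ∗ g_t`.  Then `ρ_t` is everywhere positive, satisfies the pointwise bound
`(‖∇ρ_t‖/ρ_t)^p ρ_t ≤ g_t ∗ (‖∇ρ‖^p ρ^{1-p})`, and consequently
`∫ ‖∇ρ_t‖^p ρ_t^{1-p} ≤ ∫_{ρ>0} ‖∇ρ‖^p ρ^{1-p}`. -/
theorem stmt3 (d : ℕ) (ρ : (Fin d → ℝ) → ℝ)
    (hρC1 : ContDiff ℝ 1 ρ) (hρsupp : HasCompactSupport ρ)
    (hρ0 : ∀ x, 0 ≤ ρ x) (hρ1 : ∫ x, ρ x = 1) (hρne : ∃ x, ρ x ≠ 0)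
    (p : ℝ) (hp : 1 < p)
    (hfin : IntegrableOn (fun x => l2norm (fun i => pd i ρ x) ^ p * ρ x ^ (1 - p))
      {x | 0 < ρ x} volume)
    (t : ℝ) (ht : 0 < t)
    (ρt : (Fin d → ℝ) → ℝ)
    (hρt : ∀ x, ρt x = ∫ y, heatKernel d t (x - y) * ρ y) :
    (∀ x, 0 < ρt x) ∧
    (∀ x, (l2norm (fun i => pd i ρt x) / ρt x) ^ p * ρt x ≤
      ∫ y, heatKernel d t (x - y) *
        (if ρ y = 0 then 0 else l2norm (fun i => pd i ρ y) ^ p * ρ y ^ (1 - p))) ∧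
    ∫ x, l2norm (fun i => pd i ρt x) ^ p * ρt x ^ (1 - p) ≤
      ∫ x in {x | 0 < ρ x}, l2norm (fun i => pd i ρ x) ^ p * ρ x ^ (1 - p) :=
  stmt3_general d ρ (hρC1.differentiable one_ne_zero) (integrable_of_integral_eq_one hρ1) hρ0 hρne
    p hp.le hfin t ht ρt hρt

end
end

section
/- Let μ and ν be Borel probability measures on ℝ^ℕ such that for every n ∈ ℕ both projections μ ∘ P_n^{−1} and ν ∘ P_n^{−1}, where P_n(x) = (x₁,…,xₙ), are absolutely continuous with respect to Lebesgue measure on ℝⁿ. Let T be an increasing triangular mapping whose image measure of μ is ν and S an increasing triangular mapping whose image measure of ν is μ. Then T and S are reciprocal: T(S(x)) = x for ν-almost every x and S(T(x)) = x for μ-almost every x. -/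
open MeasureTheory Real Set

noncomputable section

/-- A Borel map `T : ℝ^ℕ → ℝ^ℕ` is increasing triangular if `T_i` depends only on
`x₁,…,x_i` and is nondecreasing in `x_i`. -/
def IsIncTriangularInf (T : (ℕ → ℝ) → ℕ → ℝ) : Prop :=
  Measurable T ∧
  (∀ (i : ℕ) (x y : ℕ → ℝ), (∀ j ≤ i, x j = y j) → T x i = T y i) ∧
  (∀ (i : ℕ) (x : ℕ → ℝ), Monotone (fun t => T (Function.update x i t) i))

/-!
The composition `R` of two increasing triangular maps that exchange `μ` and `ν` is increasing
triangular and preserves a finite measure, and such a map fixes almost every point. Suppose `R`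
fixes the coordinates before `i` almost surely. Then on any event determined by these coordinates,
`{x | x i ≤ c}` and `{x | R x i ≤ c}` have the same measure. Given the earlier coordinates, both
are lower sets in `x i`, hence nested, and which inclusion holds is decided by
`R (update x i c) i ≤ c`, an event that depends on the earlier coordinates only. So the two events
agree up to a null set for every `c`, that is, `R` fixes the coordinate `i` almost surely.
-/

theorem ae_eq_set_of_inter_subset_of_measure_inter_eq {Ω : Type*} [MeasurableSpace Ω]
    {μ : Measure Ω} [IsFiniteMeasure μ] {A B D : Set Ω}
    (hA : MeasurableSet A) (hB : MeasurableSet B) (hD : MeasurableSet D)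
    (hAB : D ∩ A ⊆ B) (hBA : Dᶜ ∩ B ⊆ A)
    (hμ : μ (D ∩ A) = μ (D ∩ B)) (hμ_compl : μ (Dᶜ ∩ A) = μ (Dᶜ ∩ B)) :
    A =ᵐ[μ] B := by
  have h_inter : (D ∩ A : Set Ω) =ᵐ[μ] (D ∩ B : Set Ω) :=
    ae_eq_of_subset_of_measure_ge (subset_inter inter_subset_left hAB) hμ.ge
      (hD.inter hA).nullMeasurableSet (measure_ne_top _ _)
  have h_inter_compl : (Dᶜ ∩ B : Set Ω) =ᵐ[μ] (Dᶜ ∩ A : Set Ω) :=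
    ae_eq_of_subset_of_measure_ge (subset_inter inter_subset_left hBA) hμ_compl.le
      (hD.compl.inter hB).nullMeasurableSet (measure_ne_top _ _)
  simpa only [← union_inter_distrib_right, union_compl_self, univ_inter] using
    h_inter.union h_inter_compl.symm

theorem measure_inter_eq_measure_inter_preimage {ι : Type*} {α : ι → Type*}
    [∀ i, MeasurableSpace (α i)] {μ : Measure (∀ i, α i)} {R : (∀ i, α i) → ∀ i, α i}
    (hRμ : MeasurePreserving R μ μ) {s : Set ι} (hRs : ∀ᵐ x ∂μ, ∀ i ∈ s, R x i = x i)
    {E F : Set (∀ i, α i)} (hE : MeasurableSet E) (hEs : DependsOn (· ∈ E) s)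
    (hF : MeasurableSet F) :
    μ (E ∩ F) = μ (E ∩ R ⁻¹' F) := by
  have hRE : R ⁻¹' E =ᵐ[μ] E := by
    filter_upwards [hRs] with x hx using hEs hx
  calc μ (E ∩ F) = μ (R ⁻¹' E ∩ R ⁻¹' F) :=
        (hRμ.measure_preimage (hE.inter hF).nullMeasurableSet).symm
    _ = μ (E ∩ R ⁻¹' F) := measure_congr (hRE.inter .rfl)

/-- Increasing triangular maps between products over an arbitrary partially ordered index type:
the coordinate `i` of `T x` depends only on the coordinates of `x` up to `i` and is monotone in
`x i`. For real sequences this is `IsIncTriangularInf`. -/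
structure IsIncreasingTriangular {ι : Type*} [PartialOrder ι] [DecidableEq ι]
    {α β : ι → Type*} [∀ i, Preorder (α i)] [∀ i, Preorder (β i)]
    [∀ i, MeasurableSpace (α i)] [∀ i, MeasurableSpace (β i)]
    (T : (∀ i, α i) → ∀ i, β i) : Prop where
  measurable : Measurable T
  dependsOn_Iic : ∀ i, DependsOn (fun x ↦ T x i) (Iic i)
  monotone_update : ∀ i x, Monotone fun t ↦ T (Function.update x i t) i

theorem IsIncTriangularInf.isIncreasingTriangular {T : (ℕ → ℝ) → ℕ → ℝ}
    (hT : IsIncTriangularInf T) : IsIncreasingTriangular T :=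
  ⟨hT.1, hT.2.1, hT.2.2⟩

namespace IsIncreasingTriangular

variable {ι : Type*} [PartialOrder ι] [DecidableEq ι] {α β γ : ι → Type*}
  [∀ i, MeasurableSpace (α i)] [∀ i, MeasurableSpace (β i)] [∀ i, MeasurableSpace (γ i)]

section Preorder

variable [∀ i, Preorder (α i)] [∀ i, Preorder (β i)] [∀ i, Preorder (γ i)]

theorem dependsOn_Iio_update {T : (∀ i, α i) → ∀ i, β i} (hT : IsIncreasingTriangular T)
    (i : ι) (c : α i) : DependsOn (fun x ↦ T (Function.update x i c) i) (Iio i) := by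
  intro x y hxy
  refine hT.dependsOn_Iic i fun j hj ↦ ?_
  obtain rfl | hj := eq_or_lt_of_le (mem_Iic.1 hj)
  · simp only [Function.update_self]
  · simp only [Function.update_of_ne hj.ne, hxy j hj]

theorem apply_le_apply_update {T : (∀ i, α i) → ∀ i, β i} (hT : IsIncreasingTriangular T)
    {i : ι} {x : ∀ i, α i} {t : α i} (h : x i ≤ t) : T x i ≤ T (Function.update x i t) i := by
  simpa only [Function.update_eq_self] using hT.monotone_update i x h

theorem apply_update_le_apply {T : (∀ i, α i) → ∀ i, β i} (hT : IsIncreasingTriangular T)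
    {i : ι} {x : ∀ i, α i} {t : α i} (h : t ≤ x i) : T (Function.update x i t) i ≤ T x i := by
  simpa only [Function.update_eq_self] using hT.monotone_update i x h

theorem comp {T : (∀ i, β i) → ∀ i, γ i} {S : (∀ i, α i) → ∀ i, β i}
    (hT : IsIncreasingTriangular T) (hS : IsIncreasingTriangular S) :
    IsIncreasingTriangular (T ∘ S) where
  measurable := hT.measurable.comp hS.measurable
  dependsOn_Iic i x y hxy := hT.dependsOn_Iic i fun j hj ↦
    hS.dependsOn_Iic j fun k hk ↦ hxy k (le_trans hk hj)
  monotone_update i x := by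
    have apply_update (t : α i) : (T ∘ S) (Function.update x i t) i =
        T (Function.update (S x) i (S (Function.update x i t) i)) i := by
      refine hT.dependsOn_Iic i fun j hj ↦ ?_
      obtain rfl | hj := eq_or_lt_of_le (mem_Iic.1 hj)
      · simp only [Function.update_self]
      · rw [Function.update_of_ne hj.ne]
        exact hS.dependsOn_Iic j fun k hk ↦ Function.update_of_ne (lt_of_le_of_lt hk hj).ne _ _
    simpa only [apply_update, Function.comp_def] using
      (hT.monotone_update i (S x)).comp (hS.monotone_update i x)

end Preorder

section LinearOrder

variable [∀ i, LinearOrder (α i)] [∀ i, TopologicalSpace (α i)]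
  [∀ i, OpensMeasurableSpace (α i)] {μ : Measure (∀ i, α i)} [IsFiniteMeasure μ]

theorem ae_apply_le_iff [∀ i, OrderClosedTopology (α i)] {R : (∀ i, α i) → ∀ i, α i}
    (hR : IsIncreasingTriangular R) (hRμ : MeasurePreserving R μ μ) {i : ι}
    (hlt : ∀ᵐ x ∂μ, ∀ j < i, R x j = x j) (c : α i) :
    ∀ᵐ x ∂μ, R x i ≤ c ↔ x i ≤ c := by
  let A : Set (∀ i, α i) := {x | x i ≤ c}
  let D : Set (∀ i, α i) := {x | R (Function.update x i c) i ≤ c}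
  have hA : MeasurableSet A := measurable_pi_apply i measurableSet_Iic
  have hD : MeasurableSet D :=
    ((measurable_pi_apply i).comp (hR.measurable.comp measurable_update_left)) measurableSet_Iic
  have hD_dependsOn : DependsOn (· ∈ D) (Iio i) := fun x y hxy ↦
    congrArg (· ≤ c) (hR.dependsOn_Iio_update i c hxy)
  have hDc_dependsOn : DependsOn (· ∈ Dᶜ) (Iio i) := fun x y hxy ↦
    congrArg Not (hD_dependsOn hxy)
  have hAD : D ∩ A ⊆ R ⁻¹' A := fun x ⟨hxD, hxA⟩ ↦ (hR.apply_le_apply_update hxA).trans hxD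
  have hDA : Dᶜ ∩ R ⁻¹' A ⊆ A := fun x ⟨hxD, hxA⟩ ↦ by
    by_contra hx
    exact hxD ((hR.apply_update_le_apply (not_le.1 hx).le).trans hxA)
  have hAR : A =ᵐ[μ] R ⁻¹' A :=
    ae_eq_set_of_inter_subset_of_measure_inter_eq hA (hR.measurable hA) hD hAD hDA
      (measure_inter_eq_measure_inter_preimage hRμ hlt hD hD_dependsOn hA)
      (measure_inter_eq_measure_inter_preimage hRμ hlt hD.compl hDc_dependsOn hA)
  filter_upwards [hAR] with x hx using (iff_of_eq hx).symm

theorem ae_eq_self [Countable ι] [WellFoundedLT ι] [∀ i, OrderTopology (α i)]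
    [∀ i, SecondCountableTopology (α i)] {R : (∀ i, α i) → ∀ i, α i}
    (hR : IsIncreasingTriangular R) (hRμ : MeasurePreserving R μ μ) :
    ∀ᵐ x ∂μ, R x = x := by
  have ae_apply_eq (i : ι) : ∀ᵐ x ∂μ, R x i = x i := by
    induction i using WellFoundedLT.induction with
    | ind i ih =>
      have hlt : ∀ᵐ x ∂μ, ∀ j < i, R x j = x j :=
        ae_all_iff.2 fun j ↦ Filter.eventually_imp_distrib_left.2 (ih j)
      exact Filter.EventuallyEq.of_forall_eventually_le_iff (hR.ae_apply_le_iff hRμ hlt)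
  filter_upwards [ae_all_iff.2 ae_apply_eq] with x hx using funext hx

end LinearOrder

end IsIncreasingTriangular

theorem stmt11_general {ι : Type*} [PartialOrder ι] [DecidableEq ι] [Countable ι]
    [WellFoundedLT ι] {α β : ι → Type*}
    [∀ i, LinearOrder (α i)] [∀ i, TopologicalSpace (α i)] [∀ i, OrderTopology (α i)]
    [∀ i, SecondCountableTopology (α i)] [∀ i, MeasurableSpace (α i)]
    [∀ i, OpensMeasurableSpace (α i)]
    [∀ i, LinearOrder (β i)] [∀ i, TopologicalSpace (β i)] [∀ i, OrderTopology (β i)]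
    [∀ i, SecondCountableTopology (β i)] [∀ i, MeasurableSpace (β i)]
    [∀ i, OpensMeasurableSpace (β i)]
    {μ : Measure (∀ i, α i)} {ν : Measure (∀ i, β i)} [IsFiniteMeasure μ]
    {T : (∀ i, α i) → ∀ i, β i} {S : (∀ i, β i) → ∀ i, α i}
    (hT : IsIncreasingTriangular T) (hTμν : MeasurePreserving T μ ν)
    (hS : IsIncreasingTriangular S) (hSνμ : MeasurePreserving S ν μ) :
    (∀ᵐ x ∂ν, T (S x) = x) ∧ (∀ᵐ x ∂μ, S (T x) = x) := by
  have : IsFiniteMeasure ν := hTμν.map_eq ▸ inferInstance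
  exact ⟨(hT.comp hS).ae_eq_self (hTμν.comp hSνμ), (hS.comp hT).ae_eq_self (hSνμ.comp hTμν)⟩

/-- Let `μ` and `ν` be Borel probability measures on ℝ^ℕ whose
finite-dimensional projections are absolutely continuous with respect to Lebesgue
measure. If `T` is an increasing triangular map pushing `μ` onto `ν` and `S` an
increasing triangular map pushing `ν` onto `μ`, then `T ∘ S = id` ν-a.e. and
`S ∘ T = id` μ-a.e. -/
theorem stmt11 (μ ν : Measure (ℕ → ℝ))
    (hμP : IsProbabilityMeasure μ) (hνP : IsProbabilityMeasure ν)
    (hμproj : ∀ n : ℕ, μ.map (fun x (i : Fin n) => x i) ≪ (volume : Measure (Fin n → ℝ)))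
    (hνproj : ∀ n : ℕ, ν.map (fun x (i : Fin n) => x i) ≪ (volume : Measure (Fin n → ℝ)))
    (T S : (ℕ → ℝ) → ℕ → ℝ)
    (hT : IsIncTriangularInf T) (hTpush : μ.map T = ν)
    (hS : IsIncTriangularInf S) (hSpush : ν.map S = μ) :
    (∀ᵐ x ∂ν, T (S x) = x) ∧ (∀ᵐ x ∂μ, S (T x) = x) :=
  stmt11_general hT.isIncreasingTriangular ⟨hT.1, hTpush⟩ hS.isIncreasingTriangular ⟨hS.1, hSpush⟩

end
end

section
/- Let S : ℝ^d → ℝ^d be a C¹ diffeomorphism, let ν be a Borel probability measure on ℝ^d and let μ = ν ∘ S^{−1} be its image under S. Let c : ℝ^d → ℝ^d be a Borel vector field with ‖c‖ ∈ L¹(μ), admitting a divergence δ = div_μ c ∈ L¹(μ). Define b(x) = (DS(x))^{−1} c(S(x)), where DS(x) is the Jacobian matrix of S at x, and assume ‖b‖ ∈ L¹(ν). Then δ ∘ S is the divergence of b with respect to ν: ∫ (δ ∘ S) ψ dν = −∫ ⟨b, ∇ψ⟩ dν for all ψ ∈ C_c^∞(ℝ^d). -/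
open MeasureTheory Real Set

noncomputable section

/-- `δ` is the divergence of `v` with respect to `m`. -/
def HasDivergence {d : ℕ} (m : Measure (Fin d → ℝ)) (v : (Fin d → ℝ) → Fin d → ℝ)
    (δ : (Fin d → ℝ) → ℝ) : Prop :=
  Integrable δ m ∧ ∀ φ : (Fin d → ℝ) → ℝ, IsTest φ →
    ∫ x, δ x * φ x ∂m = - ∫ x, ∑ i, v x i * pd i φ x ∂m

/-!
Testing `div_μ c = δ` against `φ = ψ ∘ S⁻¹` and changing variables by `S` gives the claim, since the
chain rule yields `D(ψ ∘ S⁻¹)(S x) (c (S x)) = Dψ(x) (b x)`. The obstacle is that `ψ ∘ S⁻¹` is only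
`C¹`, hence not an admissible test function. Its mollifications are, they converge to it in `C¹`
with supports in a fixed compact set, and both sides of the divergence identity pass to the limit.
-/

section WeakDivergence

open Filter Function Metric ContinuousLinearMap
open scoped ContDiff Convolution Pointwise Topology

section Mollification

lemma exists_contDiffBump_rOut_tendsto_zero (E : Type*) [NormedAddCommGroup E] :
    ∃ ρ : ℕ → ContDiffBump (0 : E),
      (∀ n, (ρ n).rOut ≤ 1) ∧ Tendsto (fun n => (ρ n).rOut) atTop (𝓝 0) := by
  refine ⟨fun n => ⟨1 / (n + 1) / 2, 1 / (n + 1), by positivity, half_lt_self (by positivity)⟩,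
    fun n => ?_, tendsto_one_div_add_atTop_nhds_zero_nat⟩
  exact div_le_one_of_le₀ (by linarith [n.cast_nonneg (α := ℝ)]) (by positivity)

variable {E F : Type*} [NormedAddCommGroup E] [NormedSpace ℝ E] [FiniteDimensional ℝ E]
  [NormedAddCommGroup F] [NormedSpace ℝ F]

section Convolution

variable [MeasurableSpace E] [BorelSpace E]

lemma tendstoUniformly_normed_convolution [CompleteSpace F] {ι : Type*} {l : Filter ι}
    {ρ : ι → ContDiffBump (0 : E)} (hρ : Tendsto (fun i => (ρ i).rOut) l (𝓝 0))
    {g : E → F} (hg : UniformContinuous g) (m : Measure E) [m.IsAddHaarMeasure] :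
    TendstoUniformly (fun i => (ρ i).normed m ⋆[lsmul ℝ ℝ, m] g) g l := by
  refine Metric.tendstoUniformly_iff.2 fun ε hε => ?_
  obtain ⟨r, hr, hgr⟩ := Metric.uniformContinuous_iff.1 hg (ε / 2) (half_pos hε)
  filter_upwards [hρ.eventually_lt_const hr] with i hi x
  rw [dist_comm]
  refine ((ρ i).dist_normed_convolution_le hg.continuous.aestronglyMeasurable
    fun y hy => ?_).trans_lt (half_lt_self hε)
  exact (hgr ((mem_ball.1 hy).trans hi)).le

lemma fderiv_normed_convolution (ρ : ContDiffBump (0 : E)) {φ : E → F} (hφ : ContDiff ℝ 1 φ)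
    (hφc : HasCompactSupport φ) (m : Measure E) [m.IsAddHaarMeasure] :
    fderiv ℝ (ρ.normed m ⋆[lsmul ℝ ℝ, m] φ) = ρ.normed m ⋆[lsmul ℝ ℝ, m] fderiv ℝ φ :=
  funext fun x => (hφc.hasFDerivAt_convolution_right (lsmul ℝ ℝ)
    ρ.continuous_normed.locallyIntegrable hφ x).fderiv

lemma support_normed_convolution_subset (ρ : ContDiffBump (0 : E)) (φ : E → F)
    (m : Measure E) [IsLocallyFiniteMeasure m] [m.IsOpenPosMeasure] :
    support (ρ.normed m ⋆[lsmul ℝ ℝ, m] φ) ⊆ closedBall 0 ρ.rOut + tsupport φ :=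
  (support_convolution_subset _).trans <|
    add_subset_add (ρ.support_normed_eq.subset.trans ball_subset_closedBall) (subset_tsupport φ)

end Convolution

lemma exists_contDiff_tendstoUniformly_fderiv [CompleteSpace F] {φ : E → F} (hφ : ContDiff ℝ 1 φ)
    (hφc : HasCompactSupport φ) :
    ∃ (K : Set E) (φs : ℕ → E → F), IsCompact K ∧ (∀ n, ContDiff ℝ ∞ (φs n)) ∧
      (∀ n, tsupport (φs n) ⊆ K) ∧ TendstoUniformly φs φ atTop ∧
      TendstoUniformly (fun n => fderiv ℝ (φs n)) (fderiv ℝ φ) atTop := by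
  borelize E
  let m : Measure E := Measure.addHaar
  obtain ⟨ρ, hρ_le, hρ⟩ := exists_contDiffBump_rOut_tendsto_zero E
  have hK : IsCompact (closedBall (0 : E) 1 + tsupport φ) :=
    (isCompact_closedBall 0 1).add hφc
  refine ⟨_, fun n => (ρ n).normed m ⋆[lsmul ℝ ℝ, m] φ, hK, fun n => ?_, fun n => ?_, ?_, ?_⟩
  · exact (ρ n).hasCompactSupport_normed.contDiff_convolution_left _ (ρ n).contDiff_normed
      hφ.continuous.locallyIntegrable
  · refine closure_minimal ((support_normed_convolution_subset (ρ n) φ m).trans ?_) hK.isClosed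
    exact add_subset_add_right (closedBall_subset_closedBall (hρ_le n))
  · exact tendstoUniformly_normed_convolution hρ
      (hφc.uniformContinuous_of_continuous hφ.continuous) m
  · simp only [fderiv_normed_convolution _ hφ hφc]
    exact tendstoUniformly_normed_convolution hρ
      ((hφc.fderiv ℝ).uniformContinuous_of_continuous (hφ.continuous_fderiv one_ne_zero)) m

end Mollification

lemma exists_eventually_norm_le_of_tendstoUniformly {ι X F : Type*}
    [SeminormedAddCommGroup F] {l : Filter ι} [l.NeBot] {fs : ι → X → F} {f : X → F}
    (hfs : ∀ i, ∃ C, ∀ x, ‖fs i x‖ ≤ C) (hlim : TendstoUniformly fs f l) :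
    ∃ M, ∀ᶠ i in l, ∀ x, ‖fs i x‖ ≤ M := by
  have hclose : ∀ᶠ i in l, ∀ x, dist (f x) (fs i x) < 1 :=
    Metric.tendstoUniformly_iff.1 hlim 1 one_pos
  obtain ⟨j, hj⟩ := hclose.exists
  obtain ⟨C, hC⟩ := hfs j
  refine ⟨C + (1 + 1), hclose.mono fun i hi x => ?_⟩
  calc ‖fs i x‖ ≤ ‖fs j x‖ + dist (fs i x) (fs j x) := by
        rw [dist_eq_norm]; exact norm_le_norm_add_norm_sub' _ _
    _ ≤ C + (1 + 1) := add_le_add (hC x) <|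
        (dist_triangle_left _ _ (f x)).trans (add_le_add (hi x).le (hj x).le)

section Bilinear

variable {X F G H : Type*} [TopologicalSpace X] [MeasurableSpace X] [OpensMeasurableSpace X]
  [NormedAddCommGroup F] [NormedSpace ℝ F] [NormedAddCommGroup G] [NormedSpace ℝ G]
  [NormedAddCommGroup H] [NormedSpace ℝ H] {μ : Measure X} (L : F →L[ℝ] G →L[ℝ] H)

lemma locallyIntegrable_bilin_of_continuous [SecondCountableTopologyEither X F] {f : X → F}
    {g : X → G} (hf : Continuous f) (hg : LocallyIntegrable g μ) :
    LocallyIntegrable (fun x => L (f x) (g x)) μ := by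
  intro x
  obtain ⟨U, hU, hgU⟩ := hg x
  let V := {y | ‖f y‖ < ‖f x‖ + 1}
  have hV : IsOpen V := isOpen_lt hf.norm continuous_const
  have hf_le : ∀ᵐ y ∂μ.restrict (U ∩ V), ‖f y‖ ≤ ‖f x‖ + 1 :=
    ae_restrict_of_ae_restrict_of_subset inter_subset_right <|
      ae_restrict_of_forall_mem hV.measurableSet fun y (hy : y ∈ V) => hy.le
  exact ⟨U ∩ V, inter_mem hU (hV.mem_nhds (lt_add_one ‖f x‖)),
    L.integrable_of_bilin_of_bdd_left _ hf.aestronglyMeasurable hf_le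
      (hgU.mono_set inter_subset_left)⟩

lemma tendsto_integral_bilin_of_tendstoUniformly [T2Space X] [SecondCountableTopology X]
    {ι : Type*} {l : Filter ι} [l.NeBot] [l.IsCountablyGenerated] {K : Set X} (hK : IsCompact K)
    {fs : ι → X → F} {f : X → F} {g : X → G} (hfs : ∀ i, Continuous (fs i))
    (hfs_supp : ∀ i, tsupport (fs i) ⊆ K) (hlim : TendstoUniformly fs f l)
    (hg : LocallyIntegrable g μ) :
    Tendsto (fun i => ∫ x, L (fs i x) (g x) ∂μ) l (𝓝 (∫ x, L (f x) (g x) ∂μ)) := by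
  have hfs_compact (i : ι) : HasCompactSupport (fs i) :=
    hK.of_isClosed_subset (isClosed_tsupport _) (hfs_supp i)
  obtain ⟨M, hM⟩ := exists_eventually_norm_le_of_tendstoUniformly
    (fun i => (hfs_compact i).exists_bound_of_continuous (hfs i)) hlim
  have hbound_int : Integrable (K.indicator fun x => ‖L‖ * M * ‖g x‖) μ :=
    (integrable_indicator_iff hK.measurableSet).2 <|
      (hg.integrableOn_isCompact hK).norm.const_mul _
  refine tendsto_integral_filter_of_dominated_convergence _
    (.of_forall fun i => ?_) ?_ hbound_int (.of_forall fun x => ?_)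
  · exact (locallyIntegrable_bilin_of_continuous L (hfs i) hg).aestronglyMeasurable
  · filter_upwards [hM] with i hi
    refine .of_forall fun x => ?_
    by_cases hx : x ∈ K
    · rw [indicator_of_mem hx]
      exact (L.le_opNorm₂ _ _).trans (by gcongr; exact hi x)
    · simp [indicator_of_notMem hx, image_eq_zero_of_notMem_tsupport (mt (hfs_supp i ·) hx)]
  · exact ((L.flip (g x)).continuous.tendsto _).comp (hlim.tendsto_at x)

end Bilinear

/-- The vector field `v` has divergence `δ` with respect to `μ` in the sense of distributions, on an
arbitrary normed space and with `v` and `δ` only locally integrable; `fderiv ℝ φ x (v x)` plays the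
role of `⟨v, ∇φ⟩`, so no inner product is needed. -/
structure HasWeakDivergence {E : Type*} [NormedAddCommGroup E] [NormedSpace ℝ E]
    [MeasurableSpace E] (μ : Measure E) (v : E → E) (δ : E → ℝ) : Prop where
  locallyIntegrable_field : LocallyIntegrable v μ
  locallyIntegrable_divergence : LocallyIntegrable δ μ
  integral_mul_eq : ∀ φ : E → ℝ, ContDiff ℝ ∞ φ → HasCompactSupport φ →
    ∫ x, δ x * φ x ∂μ = - ∫ x, fderiv ℝ φ x (v x) ∂μ

section ChangeOfVariables

variable {E E' : Type*} [NormedAddCommGroup E] [NormedSpace ℝ E] [NormedAddCommGroup E']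
  [NormedSpace ℝ E']

lemma fderiv_apply_fderiv_of_leftInverse {S : E → E'} {T : E' → E} (hTS : LeftInverse T S) {x : E}
    (hT : DifferentiableAt ℝ T (S x)) (hS : DifferentiableAt ℝ S x) (v : E) :
    fderiv ℝ T (S x) (fderiv ℝ S x v) = v := by
  rw [← ContinuousLinearMap.comp_apply, ← fderiv_comp x hT hS, hTS.comp_eq_id, fderiv_id,
    ContinuousLinearMap.id_apply]

variable [FiniteDimensional ℝ E] [MeasurableSpace E] [BorelSpace E]
  [FiniteDimensional ℝ E'] [MeasurableSpace E'] [BorelSpace E']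

lemma HasWeakDivergence.integral_mul_eq_of_contDiff_one {μ : Measure E} {v : E → E} {δ : E → ℝ}
    (h : HasWeakDivergence μ v δ) {φ : E → ℝ} (hφ : ContDiff ℝ 1 φ) (hφc : HasCompactSupport φ) :
    ∫ x, δ x * φ x ∂μ = - ∫ x, fderiv ℝ φ x (v x) ∂μ := by
  obtain ⟨K, φs, hK, hφs, hφs_supp, hlim, hlim'⟩ :=
    exists_contDiff_tendstoUniformly_fderiv hφ hφc
  have hleft : Tendsto (fun n => ∫ x, δ x * φs n x ∂μ) atTop (𝓝 (∫ x, δ x * φ x ∂μ)) :=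
    tendsto_integral_bilin_of_tendstoUniformly (ContinuousLinearMap.mul ℝ ℝ).flip hK
      (fun n => (hφs n).continuous) hφs_supp hlim h.locallyIntegrable_divergence
  have hright : Tendsto (fun n => ∫ x, fderiv ℝ (φs n) x (v x) ∂μ) atTop
      (𝓝 (∫ x, fderiv ℝ φ x (v x) ∂μ)) :=
    tendsto_integral_bilin_of_tendstoUniformly (ContinuousLinearMap.id ℝ (E →L[ℝ] ℝ)) hK
      (fun n => (hφs n).continuous_fderiv (by simp))
      (fun n => (tsupport_fderiv_subset ℝ).trans (hφs_supp n)) hlim' h.locallyIntegrable_field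
  have hsmooth (n : ℕ) : ∫ x, δ x * φs n x ∂μ = - ∫ x, fderiv ℝ (φs n) x (v x) ∂μ :=
    h.integral_mul_eq _ (hφs n) (hK.of_isClosed_subset (isClosed_tsupport _) (hφs_supp n))
  simp only [hsmooth] at hleft
  exact tendsto_nhds_unique hleft hright.neg

theorem stmt12_general {S : E → E'} {Sinv : E' → E}
    (hS : ContDiff ℝ 1 S) (hSinv : ContDiff ℝ 1 Sinv)
    (hleft : LeftInverse Sinv S) (hright : Function.RightInverse Sinv S)
    {ν : Measure E} {c : E' → E'} {δ : E' → ℝ} (hδ : HasWeakDivergence (ν.map S) c δ)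
    {b : E → E} (hb : ∀ x, fderiv ℝ S x (b x) = c (S x)) :
    HasWeakDivergence ν b (δ ∘ S) := by
  let e : E ≃ₜ E' := ⟨⟨S, Sinv, hleft, hright⟩, hS.continuous, hSinv.continuous⟩
  have hb_eq (x : E) : b x = fderiv ℝ Sinv (S x) (c (S x)) := by
    rw [← hb, fderiv_apply_fderiv_of_leftInverse hleft (hSinv.differentiable one_ne_zero _)
      (hS.differentiable one_ne_zero x)]
  refine ⟨?_, (locallyIntegrable_map_homeomorph e).1 hδ.locallyIntegrable_divergence,
    fun ψ hψ hψc => ?_⟩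
  · rw [funext hb_eq]
    exact locallyIntegrable_bilin_of_continuous (ContinuousLinearMap.id ℝ (E' →L[ℝ] E))
      ((hSinv.continuous_fderiv one_ne_zero).comp hS.continuous)
      ((locallyIntegrable_map_homeomorph e).1 hδ.locallyIntegrable_field)
  · have hchain (x : E) : fderiv ℝ (ψ ∘ Sinv) (S x) (c (S x)) = fderiv ℝ ψ x (b x) := by
      rw [fderiv_comp _ (hψ.differentiable (by simp) _) (hSinv.differentiable one_ne_zero _),
        ContinuousLinearMap.comp_apply, ← hb_eq, hleft]
    have htest := hδ.integral_mul_eq_of_contDiff_one ((hψ.of_le (by simp)).comp hSinv)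
      (hψc.comp_homeomorph e.symm)
    have hS_emb : MeasurableEmbedding S := e.measurableEmbedding
    simpa only [hS_emb.integral_map, hchain, comp_apply, hleft _] using htest

end ChangeOfVariables

section Coordinates

variable {d : ℕ}

lemma norm_le_l2norm (v : Fin d → ℝ) : ‖v‖ ≤ l2norm v :=
  (pi_norm_le_iff_of_nonneg (Real.sqrt_nonneg _)).2 fun i =>
    Real.abs_le_sqrt (Finset.single_le_sum (fun j _ => sq_nonneg (v j)) (Finset.mem_univ i))

lemma sum_mul_pd (φ : (Fin d → ℝ) → ℝ) (x v : Fin d → ℝ) :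
    ∑ i, v i * pd i φ x = fderiv ℝ φ x v := by
  conv_rhs => rw [pi_eq_sum_univ' v, map_sum]
  simp only [map_smul, smul_eq_mul, pd]

variable {m : Measure (Fin d → ℝ)} {v : (Fin d → ℝ) → Fin d → ℝ} {δ : (Fin d → ℝ) → ℝ}

lemma HasDivergence.hasWeakDivergence (h : HasDivergence m v δ) (hv : AEStronglyMeasurable v m)
    (hvL1 : Integrable (fun x => l2norm (v x)) m) : HasWeakDivergence m v δ where
  locallyIntegrable_field :=
    (hvL1.mono' hv (.of_forall fun x => norm_le_l2norm (v x))).locallyIntegrable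
  locallyIntegrable_divergence := h.1.locallyIntegrable
  integral_mul_eq φ hφ hφc := by simpa only [sum_mul_pd] using h.2 φ ⟨hφ, hφc⟩

lemma HasWeakDivergence.hasDivergence (h : HasWeakDivergence m v δ) (hδ : Integrable δ m) :
    HasDivergence m v δ :=
  ⟨hδ, fun φ hφ => by simpa only [sum_mul_pd] using h.integral_mul_eq φ hφ.1 hφ.2⟩

end Coordinates

end WeakDivergence

/-- Let `S : ℝ^d → ℝ^d` be a `C¹` diffeomorphism, `ν` a Borel
probability measure and `μ = ν ∘ S⁻¹`. Let `c` be a Borel vector field with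
`‖c‖ ∈ L¹(μ)` admitting a divergence `δ = div_μ c ∈ L¹(μ)`. If
`b(x) = (DS(x))⁻¹ c(S(x))` with `‖b‖ ∈ L¹(ν)`, then `δ ∘ S` is the divergence of `b`
with respect to `ν`. -/
theorem stmt12 (d : ℕ) (S Sinv : (Fin d → ℝ) → Fin d → ℝ)
    (hS : ContDiff ℝ 1 S) (hSinv : ContDiff ℝ 1 Sinv)
    (hleft : Function.LeftInverse Sinv S) (hright : Function.RightInverse Sinv S)
    (ν : Measure (Fin d → ℝ)) (hνP : IsProbabilityMeasure ν)
    (μ : Measure (Fin d → ℝ)) (hμ : μ = ν.map S)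
    (c : (Fin d → ℝ) → Fin d → ℝ) (hcmeas : Measurable c)
    (hcL1 : Integrable (fun x => l2norm (c x)) μ)
    (δ : (Fin d → ℝ) → ℝ) (hδ : HasDivergence μ c δ)
    (b : (Fin d → ℝ) → Fin d → ℝ)
    (hb : ∀ x, fderiv ℝ S x (b x) = c (S x))
    (hbL1 : Integrable (fun x => l2norm (b x)) ν) :
    HasDivergence ν b (fun x => δ (S x)) := by
  subst hμ
  exact (stmt12_general hS hSinv hleft hright
    (hδ.hasWeakDivergence hcmeas.aestronglyMeasurable hcL1) hb).hasDivergence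
      (hδ.1.comp_measurable hS.continuous.measurable)

end
end
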